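/- arXiv:1305.1675 — 2 statements merged into one kernel-verified Lean document; each statement's English description precedes it below -/
import Mathlib

section
/- Let G be a graph on n vertices that has a Hamiltonian path. Then there exists a strategy consisting of 2n rounds of matchings in G such that, after these rounds, every pair of agents is acquainted and, moreover, every agent has occupied every vertex of G at some point of the process. In particular, AC(G) ≤ 2n. -/
open scoped Classical

/-- A permutation of the vertices arising from swapping the agents along the edges of a
matching in `G`: every vertex is fixed, or is swapped with a neighbour. -/
def IsMatchingSwap {V : Type*} (G : SimpleGraph V) (σ : Equiv.Perm V) : Prop :=
  ∀ v : V, σ v = v ∨ (G.Adj v (σ v) ∧ σ (σ v) = v)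

/-- `positions σ i a` is the vertex occupied after `i` rounds by the agent that initially
occupies vertex `a`, when round `j` rearranges agents by the permutation `σ j`. -/
def positions {V : Type*} (σ : ℕ → Equiv.Perm V) : ℕ → V → V
  | 0 => id
  | (i + 1) => (σ i) ∘ positions σ i

/-- The agents starting at `a` and `b` become acquainted within the first `t` rounds:
at some time `i ≤ t` they occupy adjacent vertices of `G`. -/
def Acquainted {V : Type*} (G : SimpleGraph V) (σ : ℕ → Equiv.Perm V) (t : ℕ) (a b : V) : Prop :=
  ∃ i ≤ t, G.Adj (positions σ i a) (positions σ i b)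

/-- The acquaintance time `AC G`: the least number `t` of rounds for which there is a
strategy (a sequence of matchings, one per round, whose swaps move the agents) after which
every pair of distinct agents is acquainted. -/
noncomputable def AC {V : Type*} (G : SimpleGraph V) : ℕ :=
  sInf {t | ∃ σ : ℕ → Equiv.Perm V, (∀ i < t, IsMatchingSwap G (σ i)) ∧
    ∀ a b : V, a ≠ b → Acquainted G σ t a b}

/-- The helicopter acquaintance time `bAC G`: as `AC G`, but each round may rearrange the
agents by an arbitrary permutation of the vertices. -/
noncomputable def bAC {V : Type*} (G : SimpleGraph V) : ℕ :=
  sInf {t | ∃ σ : ℕ → Equiv.Perm V, ∀ a b : V, a ≠ b → Acquainted G σ t a b}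

/-- The odd-even transposition of round `i` on positions `0, …, n - 1`. -/
def oeSwap (n i j : ℕ) : ℕ :=
  if j % 2 = i % 2 then (if j + 1 < n then j + 1 else j) else j - 1

theorem oeSwap_lt {n i j : ℕ} (h : j < n) : oeSwap n i j < n := by
  unfold oeSwap; split_ifs <;> omega

theorem oeSwap_oeSwap {n i j : ℕ} (h : j < n) : oeSwap n i (oeSwap n i j) = j := by
  unfold oeSwap; split_ifs <;> omega

/-- Folding of the (twice unrolled) cycle of length `2n` onto the path. -/
def oeFold (n c : ℕ) : ℕ :=
  if c < n then c else if c < 2 * n then 2 * n - 1 - c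
  else if c < 3 * n then c - 2 * n else 4 * n - 1 - c

/-- Starting point on the cycle. -/
def oeStart (n j : ℕ) : ℕ := if j % 2 = 0 then j else 2 * n - 1 - j

theorem oeFold_lt {n c : ℕ} (h : 0 < n) : oeFold n c < n := by
  unfold oeFold; split_ifs <;> omega

theorem oeStart_spec {n j : ℕ} (h : j < n) :
    oeStart n j % 2 = 0 ∧ oeStart n j + 2 ≤ 2 * n ∧ oeFold n (oeStart n j) = j := by
  unfold oeFold oeStart; split_ifs <;> omega

theorem oeSwap_oeFold {n i c : ℕ} (hn : 0 < n) (h : c + 1 < 4 * n) (hc : c % 2 = i % 2) :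
    oeSwap n i (oeFold n c) = oeFold n (c + 1) := by
  unfold oeFold oeSwap; split_ifs <;> omega

theorem oe_meet {n c d : ℕ} (hc : c % 2 = 0) (hd : d % 2 = 0) (hc2 : c + 2 ≤ 2 * n)
    (hd2 : d + 2 ≤ 2 * n) (hcd : c ≠ d) :
    ∃ i ≤ 2 * n, oeFold n (c + i) + 1 = oeFold n (d + i) ∨
      oeFold n (d + i) + 1 = oeFold n (c + i) := by
  by_cases h : (c + d) / 2 ≤ n - 1
  · refine ⟨n - 1 - (c + d) / 2, by omega, ?_⟩
    unfold oeFold; split_ifs <;> omega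
  · refine ⟨2 * n - 1 - (c + d) / 2, by omega, ?_⟩
    unfold oeFold; split_ifs <;> omega

theorem oe_visit {n c p : ℕ} (hc2 : c + 2 ≤ 2 * n) (hp : p < n) :
    ∃ i ≤ 2 * n, oeFold n (c + i) = p := by
  by_cases h : c ≤ p
  · refine ⟨p - c, by omega, ?_⟩
    unfold oeFold; split_ifs <;> omega
  · refine ⟨2 * n + p - c, by omega, ?_⟩
    unfold oeFold; split_ifs <;> omega

/-- The odd-even transposition as a permutation of `Fin n`. -/
def oePerm (n i : ℕ) : Equiv.Perm (Fin n) :=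
  Function.Involutive.toPerm (fun j => ⟨oeSwap n i j, oeSwap_lt j.2⟩)
    (fun j => Fin.ext (oeSwap_oeSwap j.2))

theorem oe_main {V : Type*} (G : SimpleGraph V) (n : ℕ) (hn : 0 < n) (e : Fin n ≃ V)
    (he : ∀ a b : Fin n, (a : ℕ) + 1 = b → G.Adj (e a) (e b)) :
    ∃ σ : ℕ → Equiv.Perm V,
      (∀ i < 2 * n, IsMatchingSwap G (σ i)) ∧
      (∀ a b : V, a ≠ b → Acquainted G σ (2 * n) a b) ∧
      (∀ a v : V, ∃ i ≤ 2 * n, positions σ i a = v) := by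
  let σ : ℕ → Equiv.Perm V := fun i => e.permCongr (oePerm n i)
  have hσ : ∀ i j, σ i (e j) = e ⟨oeSwap n i j, oeSwap_lt j.2⟩ := by
    intro i j
    simp only [σ, Equiv.permCongr_apply, Equiv.symm_apply_apply]
    rfl
  have hpos : ∀ i ≤ 2 * n, ∀ j : Fin n,
      positions σ i (e j) = e ⟨oeFold n (oeStart n j + i), oeFold_lt hn⟩ := by
    intro i
    induction i with
    | zero =>
      intro _ j
      simp [positions, (oeStart_spec j.2).2.2]
    | succ i ih =>
      intro hi j
      obtain ⟨h1, h2, -⟩ := oeStart_spec j.2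
      simp only [positions, Function.comp_apply]
      rw [ih (by omega) j, hσ]
      congr 1
      apply Fin.ext
      exact oeSwap_oeFold hn (by omega) (by omega)
  refine ⟨σ, ?_, ?_, ?_⟩
  · intro i _ v
    obtain ⟨j, rfl⟩ := e.surjective v
    rw [hσ, hσ]
    have hj := j.2
    have h3 : oeSwap n i j = j ∨ (j : ℕ) + 1 = oeSwap n i j ∨ oeSwap n i j + 1 = j := by
      unfold oeSwap; split_ifs <;> omega
    rcases h3 with h3 | h3 | h3
    · left; congr 1; exact Fin.ext h3
    · right; exact ⟨he _ _ h3, congrArg e (Fin.ext (oeSwap_oeSwap j.2))⟩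
    · right; exact ⟨(he _ _ h3).symm, congrArg e (Fin.ext (oeSwap_oeSwap j.2))⟩
  · intro a b hab
    obtain ⟨j, rfl⟩ := e.surjective a
    obtain ⟨k, rfl⟩ := e.surjective b
    obtain ⟨h1, h2, h3⟩ := oeStart_spec j.2
    obtain ⟨k1, k2, k3⟩ := oeStart_spec k.2
    have hne : oeStart n j ≠ oeStart n k := by
      intro h
      apply hab
      congr 1
      apply Fin.ext
      rw [← h3, ← k3, h]
    obtain ⟨i, hi, h⟩ := oe_meet h1 k1 h2 k2 hne
    refine ⟨i, hi, ?_⟩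
    rw [hpos i hi, hpos i hi]
    rcases h with h | h
    · exact he _ _ h
    · exact (he _ _ h).symm
  · intro a v
    obtain ⟨j, rfl⟩ := e.surjective a
    obtain ⟨k, rfl⟩ := e.surjective v
    obtain ⟨i, hi, h⟩ := oe_visit (oeStart_spec j.2).2.1 k.2
    exact ⟨i, hi, by rw [hpos i hi]; exact congrArg e (Fin.ext h)⟩

/-- If a graph `G` on `n` vertices has a Hamiltonian path, then there is a strategy of
`2n` rounds of matchings after which every pair of agents is acquainted and, moreover,
every agent has occupied every vertex at some point; in particular `AC(G) ≤ 2n`. -/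
theorem acquaintance_of_hamiltonian_path {V : Type*} [Fintype V] (G : SimpleGraph V)
    (h : ∃ (u v : V) (P : G.Walk u v), P.IsPath ∧ P.IsHamiltonian) :
    (∃ σ : ℕ → Equiv.Perm V,
      (∀ i < 2 * Fintype.card V, IsMatchingSwap G (σ i)) ∧
      (∀ a b : V, a ≠ b → Acquainted G σ (2 * Fintype.card V) a b) ∧
      (∀ a v : V, ∃ i ≤ 2 * Fintype.card V, positions σ i a = v)) ∧
    AC G ≤ 2 * Fintype.card V := by
  obtain ⟨u, v, P, hP, hH⟩ := h
  have hn : 0 < Fintype.card V := Fintype.card_pos_iff.mpr ⟨u⟩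
  have hl : P.length = Fintype.card V - 1 := hH.length_eq
  have hinj : Function.Injective (fun j : Fin (Fintype.card V) => P.getVert j) := by
    intro a b hab
    have ha := a.2
    have hb := b.2
    exact Fin.ext (hP.getVert_injOn (by simp only [Set.mem_ofPred_eq]; omega)
      (by simp only [Set.mem_ofPred_eq]; omega) hab)
  have hbij := (Fintype.bijective_iff_injective_and_card _).mpr ⟨hinj, Fintype.card_fin _⟩
  have key := oe_main G (Fintype.card V) hn (Equiv.ofBijective _ hbij) (by
    intro a b hab
    have hb := b.2
    simp only [Equiv.ofBijective_apply]
    rw [← hab]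
    exact P.adj_getVert_succ (by omega))
  refine ⟨key, ?_⟩
  obtain ⟨σ, h1, h2, -⟩ := key
  exact Nat.sInf_le ⟨σ, h1, h2⟩
end

section
/- For every ε > 0 there exists a constant C > 0 such that the following holds. If p = p(n) satisfies (1+ε) log n / n ≤ p(n) ≤ 1 − ε for all n, then the probability that a random graph G ∈ G(n,p(n)) is connected and satisfies AC(G) ≤ C log n / p(n) tends to 1 as n → ∞. -/
open scoped Classical

/-- The probability, under the binomial random graph model `G(n,p)` on vertex set
`{1, …, n}`, of the event `A`. -/
noncomputable def gnpProb (n : ℕ) (p : ℝ) (A : SimpleGraph (Fin n) → Prop) : ℝ :=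
  ∑ G : SimpleGraph (Fin n),
    if A G then p ^ G.edgeSet.ncard * (1 - p) ^ (n.choose 2 - G.edgeSet.ncard) else 0


/-! ### Finite product probability -/

section Prob

variable {E : Type*} [Fintype E] [DecidableEq E]

/-- weight of a subset under independent inclusion with probabilities `q` -/
noncomputable def wt (q : E → ℝ) (S : Finset E) : ℝ := ∏ e, if e ∈ S then q e else 1 - q e

/-- probability of an event under independent inclusion -/
noncomputable def pr (q : E → ℝ) (A : Finset E → Prop) : ℝ := ∑ S, if A S then wt q S else 0

lemma sum_prod_ite (f g : E → ℝ) :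
    ∑ S : Finset E, ∏ e, (if e ∈ S then f e else g e) = ∏ e, (f e + g e) := by
  rw [Finset.prod_add, Finset.powerset_univ]
  refine Finset.sum_congr rfl fun S _ => ?_
  rw [Finset.prod_ite]
  congr 1
  · apply Finset.prod_congr _ (fun _ _ => rfl); ext; simp
  · apply Finset.prod_congr _ (fun _ _ => rfl); ext; simp

lemma sum_wt (q : E → ℝ) : ∑ S, wt q S = 1 := by
  unfold wt
  rw [sum_prod_ite]; simp

lemma wt_nonneg {q : E → ℝ} (h0 : ∀ e, 0 ≤ q e) (h1 : ∀ e, q e ≤ 1) (S : Finset E) :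
    0 ≤ wt q S := by
  refine Finset.prod_nonneg fun e _ => ?_
  split_ifs
  · exact h0 e
  · linarith [h1 e]

lemma pr_nonneg {q : E → ℝ} (h0 : ∀ e, 0 ≤ q e) (h1 : ∀ e, q e ≤ 1) (A : Finset E → Prop) :
    0 ≤ pr q A := by
  refine Finset.sum_nonneg fun S _ => ?_
  split_ifs
  · exact wt_nonneg h0 h1 S
  · exact le_rfl

lemma pr_mono {q : E → ℝ} (h0 : ∀ e, 0 ≤ q e) (h1 : ∀ e, q e ≤ 1) {A B : Finset E → Prop}
    (h : ∀ S, A S → B S) : pr q A ≤ pr q B := by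
  refine Finset.sum_le_sum fun S _ => ?_
  have := wt_nonneg h0 h1 S
  by_cases hA : A S
  · simp [hA, h S hA]
  · simp only [hA, if_false]; split_ifs <;> simp [this]

lemma pr_compl (q : E → ℝ) (A : Finset E → Prop) : pr q A = 1 - pr q (fun S => ¬ A S) := by
  rw [eq_sub_iff_add_eq, ← sum_wt q, pr, pr, ← Finset.sum_add_distrib]
  refine Finset.sum_congr rfl fun S _ => ?_
  by_cases hA : A S <;> simp [hA]

lemma pr_union {q : E → ℝ} (h0 : ∀ e, 0 ≤ q e) (h1 : ∀ e, q e ≤ 1) {ι : Type*} (s : Finset ι)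
    (A : ι → Finset E → Prop) : pr q (fun S => ∃ i ∈ s, A i S) ≤ ∑ i ∈ s, pr q (A i) := by
  unfold pr
  rw [Finset.sum_comm]
  refine Finset.sum_le_sum fun S _ => ?_
  have hw := wt_nonneg h0 h1 S
  have hn : ∀ i ∈ s, 0 ≤ (if A i S then wt q S else 0) := by
    intro i _; split_ifs <;> simp [hw]
  split_ifs with h
  · obtain ⟨i, hi, hA⟩ := h
    have := Finset.single_le_sum hn hi
    simpa [hA] using this
  · exact Finset.sum_nonneg hn

lemma pr_union_le {q : E → ℝ} (h0 : ∀ e, 0 ≤ q e) (h1 : ∀ e, q e ≤ 1) {ι : Type*} (s : Finset ι)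
    (A : ι → Finset E → Prop) (b : ℝ) (hb : ∀ i ∈ s, pr q (A i) ≤ b) :
    pr q (fun S => ∃ i ∈ s, A i S) ≤ s.card * b := by
  refine (pr_union h0 h1 s A).trans ?_
  simpa using Finset.sum_le_sum hb

lemma pr_avoid (q : E → ℝ) (F : Finset E) :
    pr q (fun S => Disjoint S F) = ∏ e ∈ F, (1 - q e) := by
  have : ∀ S : Finset E, (if Disjoint S F then wt q S else 0) =
      ∏ e, (if e ∈ S then (if e ∈ F then 0 else q e) else 1 - q e) := by
    intro S
    split_ifs with h
    · refine Finset.prod_congr rfl fun e _ => ?_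
      by_cases he : e ∈ S
      · simp [he, Finset.disjoint_left.1 h he]
      · simp [he]
    · rw [Finset.not_disjoint_iff] at h
      obtain ⟨e, he, hF⟩ := h
      symm
      apply Finset.prod_eq_zero (Finset.mem_univ e)
      simp [he, hF]
  have h2 : pr q (fun S => Disjoint S F) =
      ∑ S : Finset E, ∏ e, (if e ∈ S then (if e ∈ F then 0 else q e) else 1 - q e) := by
    refine Finset.sum_congr rfl fun S _ => ?_
    rw [← this S]
    by_cases h : Disjoint S F <;> simp [h]
  rw [h2, sum_prod_ite]
  rw [← Finset.prod_subset (Finset.subset_univ F)]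
  · refine Finset.prod_congr rfl fun e he => ?_
    simp [he]
  · intro e _ he
    simp [he]

lemma sprinkle {q q1 q2 : E → ℝ} (hq : ∀ e, 1 - q e = (1 - q1 e) * (1 - q2 e))
    (φ : Finset E → ℝ) :
    ∑ S, wt q S * φ S = ∑ S1, wt q1 S1 * ∑ S2, wt q2 S2 * φ (S1 ∪ S2) := by
  have key : ∀ S : Finset E, wt q S =
      ∑ S1, ∑ S2, (if S1 ∪ S2 = S then wt q1 S1 * wt q2 S2 else 0) := by
    intro S
    have h1 : ∀ S1 S2 : Finset E, (if S1 ∪ S2 = S then wt q1 S1 * wt q2 S2 else 0) =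
        ∏ e, (if e ∈ S2 then
          (if e ∈ S then (if e ∈ S1 then q1 e * q2 e else (1 - q1 e) * q2 e) else 0)
          else (if e ∈ S1 then (if e ∈ S then q1 e * (1 - q2 e) else 0)
            else (if e ∈ S then 0 else (1 - q1 e) * (1 - q2 e)))) := by
      intro S1 S2
      split_ifs with h
      · unfold wt
        rw [← Finset.prod_mul_distrib]
        refine Finset.prod_congr rfl fun e _ => ?_
        subst h
        by_cases a : e ∈ S1 <;> by_cases b : e ∈ S2 <;> simp [a, b]
      · obtain ⟨e, he⟩ : ∃ e, ¬ (e ∈ S1 ∪ S2 ↔ e ∈ S) := by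
          by_contra hc
          push Not at hc
          exact h (Finset.ext hc)
        symm
        apply Finset.prod_eq_zero (Finset.mem_univ e)
        by_cases a : e ∈ S1 <;> by_cases b : e ∈ S2 <;> by_cases c : e ∈ S <;> simp_all
    simp_rw [h1, sum_prod_ite]
    have h2 : ∀ S1 : Finset E, (∏ e,
        ((if e ∈ S then (if e ∈ S1 then q1 e * q2 e else (1 - q1 e) * q2 e) else 0) +
          (if e ∈ S1 then (if e ∈ S then q1 e * (1 - q2 e) else 0)
            else (if e ∈ S then 0 else (1 - q1 e) * (1 - q2 e))))) =
        ∏ e, (if e ∈ S1 then (if e ∈ S then q1 e else 0) else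
          (if e ∈ S then (1 - q1 e) * q2 e else (1 - q1 e) * (1 - q2 e))) := by
      intro S1
      refine Finset.prod_congr rfl fun e _ => ?_
      by_cases a : e ∈ S1 <;> by_cases b : e ∈ S <;> simp [a, b]
      ring
    simp_rw [h2, sum_prod_ite]
    unfold wt
    refine Finset.prod_congr rfl fun e _ => ?_
    by_cases b : e ∈ S <;> simp [b, hq]
    linarith [hq e]
  simp_rw [key, Finset.sum_mul, Finset.mul_sum]
  rw [Finset.sum_comm]
  refine Finset.sum_congr rfl fun S1 _ => ?_
  rw [Finset.sum_comm]
  refine Finset.sum_congr rfl fun S2 _ => ?_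
  simp [mul_assoc]

lemma pr_eq (q : E → ℝ) (A : Finset E → Prop) :
    pr q A = ∑ S, wt q S * (if A S then 1 else 0) := by
  simp [pr]

lemma pr_two_stage {q q1 q2 : E → ℝ} (hq : ∀ e, 1 - q e = (1 - q1 e) * (1 - q2 e))
    (h0 : ∀ e, 0 ≤ q1 e) (h1 : ∀ e, q1 e ≤ 1)
    {A B : Finset E → Prop} {a b : ℝ} (hb : 0 ≤ b)
    (h20 : ∀ e, 0 ≤ q2 e) (h21 : ∀ e, q2 e ≤ 1)
    (hB : pr q1 B ≤ a) (hA : ∀ S1, ¬ B S1 → pr q2 (fun S2 => A (S1 ∪ S2)) ≤ b) :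
    pr q A ≤ a + b := by
  rw [pr_eq, sprinkle hq]
  have : ∀ S1, wt q1 S1 * ∑ S2, wt q2 S2 * (if A (S1 ∪ S2) then 1 else 0) ≤
      (if B S1 then wt q1 S1 else 0) + wt q1 S1 * b := by
    intro S1
    have hw := wt_nonneg h0 h1 S1
    rw [← pr_eq q2 (fun S2 => A (S1 ∪ S2))]
    split_ifs with h
    · have hle : pr q2 (fun S2 => A (S1 ∪ S2)) ≤ 1 := by
        rw [pr_compl]; linarith [pr_nonneg h20 h21 (fun S2 => ¬ A (S1 ∪ S2))]
      nlinarith [mul_nonneg hw hb]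
    · have := mul_le_mul_of_nonneg_left (hA S1 h) hw
      linarith
  refine (Finset.sum_le_sum fun S1 _ => this S1).trans ?_
  rw [Finset.sum_add_distrib, ← Finset.sum_mul, sum_wt]
  unfold pr at hB
  linarith

/-- decreasing events become less likely when the probabilities grow -/
lemma pr_anti {q q1 : E → ℝ} (h0 : ∀ e, 0 ≤ q1 e) (hle : ∀ e, q1 e ≤ q e) (h1 : ∀ e, q e < 1)
    {A : Finset E → Prop} (hA : ∀ S T, S ⊆ T → A T → A S) : pr q A ≤ pr q1 A := by
  have hq : ∀ e, 1 - q e = (1 - q1 e) * (1 - (1 - (1 - q e) / (1 - q1 e))) := by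
    intro e
    have : 1 - q1 e ≠ 0 := by linarith [hle e, h1 e]
    field_simp
    ring
  have := pr_two_stage hq h0 (fun e => by linarith [hle e, h1 e]) (A := A) (B := A) le_rfl
    (fun e => by
      have : 0 < 1 - q1 e := by linarith [hle e, h1 e]
      rw [sub_nonneg, div_le_one this]; linarith [hle e])
    (fun e => by
      have h3 : 0 < 1 - q1 e := by linarith [hle e, h1 e]
      have : 0 ≤ (1 - q e) / (1 - q1 e) := div_nonneg (by linarith [h1 e]) h3.le
      linarith) le_rfl
    (fun S1 hS1 => by
      have : ∀ S2, ¬ A (S1 ∪ S2) := fun S2 h => hS1 (hA _ _ Finset.subset_union_left h)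
      simp [pr, this])
  linarith

end Prob


/-! ### Long paths by depth first search -/

section DFS

variable {V : Type*} [Fintype V]

lemma dfs_aux (G : SimpleGraph V) (k : ℕ)
    (hJ : ∀ A B : Finset V, Disjoint A B → k ≤ A.card → k ≤ B.card → ∃ a ∈ A, ∃ b ∈ B, G.Adj a b)
    (N : ℕ) : ∀ (S T : Finset V) (U : List V), 2 * T.card + U.length ≤ N → U.Nodup →
      U.IsChain G.Adj → Disjoint S T → (∀ u ∈ U, u ∉ S ∧ u ∉ T) →
      S.card + T.card + U.length = Fintype.card V → S.card ≤ T.card →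
      (∀ s ∈ S, ∀ t ∈ T, ¬ G.Adj s t) →
      ∃ l : List V, l.Nodup ∧ l.IsChain G.Adj ∧ Fintype.card V ≤ l.length + 2 * k := by
  induction N with
  | zero =>
    intro S T U hN hU hc hd hUd hcard hST hno
    refine ⟨U, hU, hc, ?_⟩
    omega
  | succ N ih =>
    intro S T U hN hU hc hd hUd hcard hST hno
    rcases hST.eq_or_lt with heq | hlt
    · refine ⟨U, hU, hc, ?_⟩
      by_contra hcon
      obtain ⟨a, ha, b, hb, hab⟩ := hJ S T hd (by omega) (by omega)
      exact hno a ha b hb hab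
    · have push : ∀ t ∈ T, (t :: U).IsChain G.Adj →
          ∃ l : List V, l.Nodup ∧ l.IsChain G.Adj ∧ Fintype.card V ≤ l.length + 2 * k := by
        intro t ht hch
        have hcT := Finset.card_erase_of_mem ht
        have hpos : 0 < T.card := Finset.card_pos.2 ⟨t, ht⟩
        refine ih S (T.erase t) (t :: U) ?_ ?_ hch ?_ ?_ ?_ ?_ ?_
        · simp; omega
        · exact List.nodup_cons.2 ⟨fun h => (hUd t h).2 ht, hU⟩
        · exact hd.mono_right (Finset.erase_subset _ _)
        · intro u hu
          rcases List.mem_cons.1 hu with rfl | hu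
          · exact ⟨fun h => Finset.disjoint_left.1 hd h ht, by simp⟩
          · exact ⟨(hUd u hu).1, fun h => (hUd u hu).2 (Finset.mem_of_mem_erase h)⟩
        · simp; omega
        · omega
        · intro s hs t' ht'
          exact hno s hs t' (Finset.mem_of_mem_erase ht')
      cases U with
      | nil =>
        obtain ⟨t, ht⟩ := Finset.card_pos.1 (by omega : 0 < T.card)
        exact push t ht (by simp)
      | cons u U =>
        by_cases h : ∃ t ∈ T, G.Adj t u
        · obtain ⟨t, ht, htu⟩ := h
          exact push t ht (List.IsChain.cons_cons htu hc)
        · push Not at h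
          have huS := (hUd u (by simp)).1
          have huT := (hUd u (by simp)).2
          refine ih (insert u S) T U ?_ (List.nodup_cons.1 hU).2 hc.tail ?_ ?_ ?_ ?_ ?_
          · simp at hN; omega
          · rw [Finset.disjoint_insert_left]; exact ⟨huT, hd⟩
          · intro w hw
            refine ⟨?_, (hUd w (by simp [hw])).2⟩
            rw [Finset.mem_insert]
            rintro (rfl | h')
            · exact (List.nodup_cons.1 hU).1 hw
            · exact (hUd w (by simp [hw])).1 h'
          · rw [Finset.card_insert_of_notMem huS]; simp at hcard; omega
          · rw [Finset.card_insert_of_notMem huS]; omega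
          · intro s hs t ht
            rcases Finset.mem_insert.1 hs with rfl | hs
            · exact fun hh => h t ht hh.symm
            · exact hno s hs t ht

lemma exists_long_path (G : SimpleGraph V) (k : ℕ)
    (hJ : ∀ A B : Finset V, Disjoint A B → k ≤ A.card → k ≤ B.card →
      ∃ a ∈ A, ∃ b ∈ B, G.Adj a b) :
    ∃ l : List V, l.Nodup ∧ l.IsChain G.Adj ∧ Fintype.card V ≤ l.length + 2 * k := by
  refine dfs_aux G k hJ (2 * Fintype.card V) ∅ Finset.univ [] ?_ ?_ ?_ ?_ ?_ ?_ ?_ ?_ <;> simp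

/-- an even path given by a function -/
lemma exists_even_path [Nonempty V] (G : SimpleGraph V) (k : ℕ)
    (hJ : ∀ A B : Finset V, Disjoint A B → k ≤ A.card → k ≤ B.card →
      ∃ a ∈ A, ∃ b ∈ B, G.Adj a b) :
    ∃ (h : ℕ) (π : ℕ → V), (∀ i < 2 * h, ∀ j < 2 * h, π i = π j → i = j) ∧
      (∀ i, i + 1 < 2 * h → G.Adj (π i) (π (i + 1))) ∧ Fintype.card V ≤ 2 * h + 1 + 2 * k := by
  obtain ⟨l, hn, hc, hl⟩ := exists_long_path G k hJ
  refine ⟨l.length / 2, fun i => l.getD i (Classical.arbitrary V), ?_, ?_, by omega⟩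
  · intro i hi j hj hij
    have hi' : i < l.length := by omega
    have hj' : j < l.length := by omega
    simp only [List.getD_eq_getElem _ _ hi', List.getD_eq_getElem _ _ hj'] at hij
    exact (hn.getElem_inj_iff).1 hij
  · intro i hi
    have hi' : i < l.length := by omega
    have hj' : i + 1 < l.length := by omega
    simp only [List.getD_eq_getElem _ _ hi', List.getD_eq_getElem _ _ hj']
    exact List.isChain_iff_getElem.1 hc i hj'

end DFS

/-! ### Strategies as lists -/

section Strat

variable {V : Type*}

/-- position of an agent after a list of rounds -/
def runL : List (Equiv.Perm V) → V → V
  | [], a => a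
  | σ :: L, a => runL L (σ a)

/-- acquaintance during a list of rounds -/
def acqL (G : SimpleGraph V) : List (Equiv.Perm V) → V → V → Prop
  | [], a, b => G.Adj a b
  | σ :: L, a, b => G.Adj a b ∨ acqL G L (σ a) (σ b)

lemma runL_append (L1 L2 : List (Equiv.Perm V)) (a : V) :
    runL (L1 ++ L2) a = runL L2 (runL L1 a) := by
  induction L1 generalizing a with
  | nil => rfl
  | cons σ L ih => exact ih _

lemma acqL_append_left (G : SimpleGraph V) (L1 L2 : List (Equiv.Perm V)) (a b : V)
    (h : acqL G L1 a b) : acqL G (L1 ++ L2) a b := by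
  induction L1 generalizing a b with
  | nil =>
    cases L2 with
    | nil => exact h
    | cons => exact Or.inl h
  | cons σ L ih =>
    rcases h with h | h
    · exact Or.inl h
    · exact Or.inr (ih _ _ h)

lemma acqL_append_right (G : SimpleGraph V) (L1 L2 : List (Equiv.Perm V)) (a b : V)
    (h : acqL G L2 (runL L1 a) (runL L1 b)) : acqL G (L1 ++ L2) a b := by
  induction L1 generalizing a b with
  | nil => exact h
  | cons σ L ih => exact Or.inr (ih _ _ h)

lemma acqL_take (G : SimpleGraph V) (L : List (Equiv.Perm V)) (t : ℕ) (a b : V)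
    (h : G.Adj (runL (L.take t) a) (runL (L.take t) b)) : acqL G L a b := by
  rw [← List.take_append_drop t L]
  apply acqL_append_right
  cases L.drop t with
  | nil => exact h
  | cons => exact Or.inl h

lemma IsMatchingSwap.invol {G : SimpleGraph V} {σ : Equiv.Perm V} (h : IsMatchingSwap G σ) (v : V) :
    σ (σ v) = v := by
  rcases h v with h | h
  · rw [h, h]
  · exact h.2

lemma runL_reverse (G : SimpleGraph V) (L : List (Equiv.Perm V))
    (h : ∀ σ ∈ L, IsMatchingSwap G σ) (a : V) : runL (L ++ L.reverse) a = a := by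
  induction L generalizing a with
  | nil => rfl
  | cons σ L ih =>
    have : (σ :: L) ++ (σ :: L).reverse = σ :: ((L ++ L.reverse) ++ [σ]) := by simp
    rw [this, runL, runL_append, ih (fun τ hτ => h τ (by simp [hτ]))]
    exact (h σ (by simp)).invol a

lemma positions_succ' (σ : ℕ → Equiv.Perm V) (i : ℕ) (a : V) :
    positions σ (i + 1) a = positions (fun j => σ (j + 1)) i (σ 0 a) := by
  induction i with
  | zero => rfl
  | succ i ih =>
    rw [positions, Function.comp, ih]
    rfl

lemma acquainted_of_acqL (G : SimpleGraph V) (L : List (Equiv.Perm V)) (a b : V)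
    (h : acqL G L a b) : Acquainted G (fun i => L.getD i 1) L.length a b := by
  induction L generalizing a b with
  | nil => exact ⟨0, le_rfl, h⟩
  | cons σ L ih =>
    rcases h with h | h
    · exact ⟨0, Nat.zero_le _, h⟩
    · obtain ⟨i, hi, h⟩ := ih _ _ h
      refine ⟨i + 1, by simpa using hi, ?_⟩
      rw [positions_succ', positions_succ']
      simpa using h

/-- existence of a good strategy -/
def Good (G : SimpleGraph V) (t : ℕ) : Prop :=
  ∃ L : List (Equiv.Perm V), L.length = t ∧ (∀ σ ∈ L, IsMatchingSwap G σ) ∧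
    ∀ a b : V, a ≠ b → acqL G L a b

lemma Good.AC_le {G : SimpleGraph V} {t : ℕ} (h : Good G t) : AC G ≤ t := by
  obtain ⟨L, rfl, hL, hacq⟩ := h
  refine Nat.sInf_le ⟨fun i => L.getD i 1, ?_, fun a b hab => acquainted_of_acqL G L a b (hacq a b hab)⟩
  intro i hi
  simp only [List.getD_eq_getElem _ _ hi]
  exact hL _ (List.getElem_mem hi)

lemma reach_swap {G : SimpleGraph V} {σ : Equiv.Perm V} (h : IsMatchingSwap G σ) (v : V) :
    G.Reachable v (σ v) := by
  rcases h v with h | h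
  · rw [h]
  · exact h.1.reachable

lemma acqL_reach {G : SimpleGraph V} (L : List (Equiv.Perm V))
    (hL : ∀ σ ∈ L, IsMatchingSwap G σ) (a b : V) (h : acqL G L a b) : G.Reachable a b := by
  induction L generalizing a b with
  | nil => exact SimpleGraph.Adj.reachable h
  | cons σ L ih =>
    rcases h with h | h
    · exact h.reachable
    · exact ((reach_swap (hL σ (by simp)) a).trans
        (ih (fun τ hτ => hL τ (by simp [hτ])) _ _ h)).trans (reach_swap (hL σ (by simp)) b).symm

lemma Good.connected [Nonempty V] {G : SimpleGraph V} {t : ℕ} (h : Good G t) : G.Connected := by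
  obtain ⟨L, rfl, hL, hacq⟩ := h
  refine ⟨fun a b => ?_⟩
  by_cases hab : a = b
  · rw [hab]
  · exact acqL_reach L hL a b (hacq a b hab)

end Strat


/-! ### Matchings and rotations along a path -/

section Rot

variable {V : Type*}

lemma exists_perm (G : SimpleGraph V) (g : V → V) (hg : ∀ v, g (g v) = v)
    (hadj : ∀ v, g v = v ∨ G.Adj v (g v)) :
    ∃ τ : Equiv.Perm V, IsMatchingSwap G τ ∧ ∀ v, τ v = g v := by
  refine ⟨Function.Involutive.toPerm g hg, fun v => ?_, fun v => rfl⟩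
  rcases hadj v with h | h
  · exact Or.inl h
  · exact Or.inr ⟨h, hg v⟩

lemma exists_match (G : SimpleGraph V) (R : Set V) (x y : V → V)
    (hx : ∀ r ∈ R, ∀ r' ∈ R, x r = x r' → r = r') (hy : ∀ r ∈ R, ∀ r' ∈ R, y r = y r' → r = r')
    (hxy : ∀ r ∈ R, ∀ r' ∈ R, x r ≠ y r') (hadj : ∀ r ∈ R, G.Adj (x r) (y r)) :
    ∃ τ : Equiv.Perm V, IsMatchingSwap G τ ∧ (∀ r ∈ R, τ (x r) = y r ∧ τ (y r) = x r) ∧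
      ∀ v, (∀ r ∈ R, v ≠ x r ∧ v ≠ y r) → τ v = v := by
  set g : V → V := fun v => if h : ∃ r ∈ R, x r = v then y h.choose else
    if h : ∃ r ∈ R, y r = v then x h.choose else v with hgdef
  have gx : ∀ r ∈ R, g (x r) = y r := by
    intro r hr
    have h : ∃ r' ∈ R, x r' = x r := ⟨r, hr, rfl⟩
    simp only [hgdef, dif_pos h]
    rw [hx _ h.choose_spec.1 r hr h.choose_spec.2]
  have gy : ∀ r ∈ R, g (y r) = x r := by
    intro r hr
    have h : ∃ r' ∈ R, y r' = y r := ⟨r, hr, rfl⟩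
    have h' : ¬ ∃ r' ∈ R, x r' = y r := by
      rintro ⟨r', hr', he⟩; exact hxy r' hr' r hr he
    simp only [hgdef, dif_pos h, dif_neg h']
    rw [hy _ h.choose_spec.1 r hr h.choose_spec.2]
  have gn : ∀ v, (∀ r ∈ R, v ≠ x r ∧ v ≠ y r) → g v = v := by
    intro v hv
    have h : ¬ ∃ r ∈ R, x r = v := by
      rintro ⟨r, hr, he⟩; exact (hv r hr).1 he.symm
    have h' : ¬ ∃ r ∈ R, y r = v := by
      rintro ⟨r, hr, he⟩; exact (hv r hr).2 he.symm
    simp only [hgdef, dif_neg h, dif_neg h']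
  have cases3 : ∀ v, (∃ r ∈ R, v = x r) ∨ (∃ r ∈ R, v = y r) ∨ (∀ r ∈ R, v ≠ x r ∧ v ≠ y r) := by
    intro v
    by_cases h : ∃ r ∈ R, v = x r
    · exact Or.inl h
    by_cases h' : ∃ r ∈ R, v = y r
    · exact Or.inr (Or.inl h')
    push Not at h h'
    exact Or.inr (Or.inr fun r hr => ⟨h r hr, h' r hr⟩)
  obtain ⟨τ, h1, h2⟩ := exists_perm G g (by
    intro v
    rcases cases3 v with ⟨r, hr, rfl⟩ | ⟨r, hr, rfl⟩ | h
    · rw [gx r hr, gy r hr]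
    · rw [gy r hr, gx r hr]
    · rw [gn v h, gn v h]) (by
    intro v
    rcases cases3 v with ⟨r, hr, rfl⟩ | ⟨r, hr, rfl⟩ | h
    · rw [gx r hr]; exact Or.inr (hadj r hr)
    · rw [gy r hr]; exact Or.inr (hadj r hr).symm
    · exact Or.inl (gn v h))
  refine ⟨τ, h1, fun r hr => ?_, fun v hv => ?_⟩
  · rw [h2, h2]; exact ⟨gx r hr, gy r hr⟩
  · rw [h2]; exact gn v hv

/-- The three phase strategy. -/
lemma good_of_phases (G : SimpleGraph V) (R : Set V) (u w : V → V)
    (hu : ∀ r ∈ R, u r ∉ R) (hw : ∀ r ∈ R, w r ∉ R)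
    (hui : ∀ r ∈ R, ∀ r' ∈ R, u r = u r' → r = r') (hwi : ∀ r ∈ R, ∀ r' ∈ R, w r = w r' → r = r')
    (huw : ∀ r ∈ R, ∀ r' ∈ R, u r ≠ w r')
    (h1 : ∀ r ∈ R, G.Adj r (u r)) (h2 : ∀ r ∈ R, G.Adj (u r) (w r))
    (L : List (Equiv.Perm V)) (hL : ∀ σ ∈ L, IsMatchingSwap G σ)
    (hacq : ∀ a b, a ∉ R → b ∉ R → a ≠ b → acqL G L a b) : Good G (5 * L.length + 3) := by
  obtain ⟨τ, hτ, hτ1, hτ2⟩ := exists_match G R id u (fun r _ r' _ h => h) hui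
    (fun r hr r' hr' h => hu r' hr' (by rw [← h]; exact hr)) h1
  obtain ⟨κ, hκ, hκ1, hκ2⟩ := exists_match G R u w hui hwi huw h2
  have hrev := runL_reverse G L hL
  set LL := L ++ L.reverse with hLL
  refine ⟨LL ++ ([τ] ++ (LL ++ ([κ, τ] ++ L))), ?_, ?_, ?_⟩
  · simp [hLL]; ring
  · intro σ hσ
    have : σ ∈ L ∨ σ = τ ∨ σ = κ := by
      simp [hLL] at hσ; tauto
    rcases this with h | rfl | rfl
    · exact hL σ h
    · exact hτ
    · exact hκ
  · intro a b hab
    have c1 : a ∉ R → b ∉ R → acqL G (LL ++ ([τ] ++ (LL ++ ([κ, τ] ++ L)))) a b := by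
      intro ha hb
      apply acqL_append_left
      apply acqL_append_left
      exact hacq a b ha hb hab
    have c2 : τ a ∉ R → τ b ∉ R → acqL G (LL ++ ([τ] ++ (LL ++ ([κ, τ] ++ L)))) a b := by
      intro ha hb
      apply acqL_append_right
      rw [hrev, hrev]
      apply acqL_append_right
      apply acqL_append_left
      apply acqL_append_left
      exact hacq _ _ ha hb (fun h => hab (τ.injective h))
    have c3 : τ (κ (τ a)) ∉ R → τ (κ (τ b)) ∉ R →
        acqL G (LL ++ ([τ] ++ (LL ++ ([κ, τ] ++ L)))) a b := by
      intro ha hb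
      apply acqL_append_right
      rw [hrev, hrev]
      apply acqL_append_right
      apply acqL_append_right
      rw [hrev, hrev]
      apply acqL_append_right
      exact hacq _ _ ha hb (fun h => hab (τ.injective (κ.injective (τ.injective h))))
    have fixR : ∀ r ∈ R, κ r = r := by
      intro r hr
      apply hκ2
      intro r' hr'
      exact ⟨fun h => hu r' hr' (h ▸ hr), fun h => hw r' hr' (h ▸ hr)⟩
    have fixw : ∀ r ∈ R, τ (w r) = w r := by
      intro r hr
      apply hτ2
      intro r' hr'
      exact ⟨fun h => hw r hr (by rw [h]; exact hr'), fun h => huw r' hr' r hr h.symm⟩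
    have out : ∀ v, (v ∉ R ∧ τ v ∉ R) ∨ (v ∉ R ∧ τ (κ (τ v)) ∉ R) ∨
        (τ v ∉ R ∧ τ (κ (τ v)) ∉ R) := by
      intro v
      by_cases hv : v ∈ R
      · right; right
        have e1 : τ v = u v := (hτ1 v hv).1
        rw [e1, (hκ1 v hv).1, fixw v hv]
        exact ⟨hu v hv, hw v hv⟩
      by_cases hv2 : ∃ r ∈ R, v = u r
      · obtain ⟨r, hr, rfl⟩ := hv2
        right; left
        have e1 : τ (u r) = r := (hτ1 r hr).2
        have e2 : τ r = u r := (hτ1 r hr).1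
        rw [e1, fixR r hr, e2]
        exact ⟨hv, hv⟩
      · left
        refine ⟨hv, ?_⟩
        rw [hτ2 v]
        · exact hv
        · intro r hr
          exact ⟨fun h => hv (h ▸ hr), fun h => hv2 ⟨r, hr, h⟩⟩
    have oa := out a
    have ob := out b
    tauto

/-- swap of indices along a path -/
def sw (m t i : ℕ) : ℕ := if (i + t) % 2 = 0 then (if i + 1 < m then i + 1 else i) else i - 1

/-- folding of the integers onto the path -/
def fld (m x : ℕ) : ℕ := if x % (2 * m) < m then x % (2 * m) else 2 * m - 1 - x % (2 * m)

/-- phase of an index -/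
def ph (m i : ℕ) : ℕ := if i % 2 = 0 then i else 2 * m - 1 - i

lemma sw_lt {m t i : ℕ} (h : i < m) : sw m t i < m := by
  unfold sw; split_ifs <;> omega

lemma sw_sw {m t i : ℕ} (h : i < m) : sw m t (sw m t i) = i := by
  unfold sw; split_ifs <;> omega

lemma fld_lt {m x : ℕ} (h : 0 < m) : fld m x < m := by
  have := Nat.mod_lt x (by omega : 0 < 2 * m)
  unfold fld; split_ifs <;> omega

lemma ph_even {m i : ℕ} (_ : i < m) : ph m i % 2 = 0 := by
  unfold ph; split_ifs <;> omega

lemma ph_lt {m i : ℕ} (h : i < m) : ph m i < 2 * m := by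
  unfold ph; split_ifs <;> omega

lemma fld_ph {m i : ℕ} (h : i < m) : fld m (ph m i) = i := by
  have e : ph m i % (2 * m) = ph m i := Nat.mod_eq_of_lt (ph_lt h)
  unfold fld
  rw [e]
  unfold ph
  split_ifs <;> omega

lemma sw_fld {m x t : ℕ} (hm : 0 < m) (hx : x % 2 = 0) :
    sw m t (fld m (x + t)) = fld m (x + t + 1) := by
  have hlt := Nat.mod_lt (x + t) (by omega : 0 < 2 * m)
  have hpar : (x + t) % (2 * m) % 2 = (x + t) % 2 := Nat.mod_mod_of_dvd _ (Dvd.intro _ rfl)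
  have hs : (x + t + 1) % (2 * m) =
      if (x + t) % (2 * m) + 1 = 2 * m then 0 else (x + t) % (2 * m) + 1 := by
    have h1 : (x + t + 1) % (2 * m) = ((x + t) % (2 * m) + 1) % (2 * m) := by simp
    rw [h1]
    split_ifs with h
    · rw [h, Nat.mod_self]
    · exact Nat.mod_eq_of_lt (by omega)
  unfold fld
  rw [hs]
  generalize (x + t) % (2 * m) = r at *
  unfold sw
  split_ifs <;> omega

lemma exists_rot (G : SimpleGraph V) (m : ℕ) (π : ℕ → V)
    (hinj : ∀ i < m, ∀ j < m, π i = π j → i = j)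
    (hadj : ∀ i, i + 1 < m → G.Adj (π i) (π (i + 1))) (t : ℕ) :
    ∃ τ : Equiv.Perm V, IsMatchingSwap G τ ∧ ∀ i < m, τ (π i) = π (sw m t i) := by
  set g : V → V := fun v => if h : ∃ i, i < m ∧ π i = v then π (sw m t h.choose) else v with hg
  have g1 : ∀ i < m, g (π i) = π (sw m t i) := by
    intro i hi
    have h : ∃ j, j < m ∧ π j = π i := ⟨i, hi, rfl⟩
    simp only [hg, dif_pos h]
    rw [hinj _ h.choose_spec.1 i hi h.choose_spec.2]
  have g2 : ∀ v, (¬ ∃ i, i < m ∧ π i = v) → g v = v := by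
    intro v h
    simp only [hg, dif_neg h]
  obtain ⟨τ, h1, h2⟩ := exists_perm G g (by
    intro v
    by_cases h : ∃ i, i < m ∧ π i = v
    · obtain ⟨i, hi, rfl⟩ := h
      rw [g1 i hi, g1 _ (sw_lt hi), sw_sw hi]
    · rw [g2 v h, g2 v h]) (by
    intro v
    by_cases h : ∃ i, i < m ∧ π i = v
    · obtain ⟨i, hi, rfl⟩ := h
      rw [g1 i hi]
      unfold sw
      split_ifs with a b
      · exact Or.inr (hadj i b)
      · exact Or.inl rfl
      · rcases Nat.eq_zero_or_pos i with h0 | h0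
        · left; rw [h0]
        · right
          have := hadj (i - 1) (by omega)
          rw [Nat.sub_add_cancel h0] at this
          exact this.symm
    · exact Or.inl (g2 v h))
  exact ⟨τ, h1, fun i hi => by rw [h2, g1 i hi]⟩

/-- rotation list for a path -/
lemma exists_rotL (G : SimpleGraph V) (m : ℕ) (π : ℕ → V)
    (hinj : ∀ i < m, ∀ j < m, π i = π j → i = j)
    (hadj : ∀ i, i + 1 < m → G.Adj (π i) (π (i + 1))) (T : ℕ) :
    ∃ L : List (Equiv.Perm V), L.length = T ∧ (∀ σ ∈ L, IsMatchingSwap G σ) ∧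
      ∀ t ≤ T, ∀ i < m, runL (L.take t) (π i) = π (fld m (ph m i + t)) := by
  choose ρ hρ1 hρ2 using exists_rot G m π hinj hadj
  refine ⟨(List.range T).map ρ, by simp, ?_, ?_⟩
  · intro σ hσ
    obtain ⟨t, -, rfl⟩ := List.mem_map.1 hσ
    exact hρ1 t
  · intro t ht i hi
    rw [← List.map_take, List.take_range, min_eq_left ht]
    clear ht
    induction t with
    | zero => simp [runL, fld_ph hi]
    | succ t ih =>
      rw [List.range_succ, List.map_append, runL_append, ih]
      simp only [List.map_cons, List.map_nil, runL]
      rw [hρ2 _ _ (fld_lt (by omega)), sw_fld (by omega) (ph_even hi)]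
      rfl

/-- in a full reversal any two agents of the path become neighbours -/
lemma fld_meet {m i j : ℕ} (hi : i < m) (hj : j < m) (hij : i ≠ j) :
    ∃ t ≤ m, fld m (ph m i + t) + 1 = fld m (ph m j + t) ∨
      fld m (ph m j + t) + 1 = fld m (ph m i + t) := by
  have key : ∀ x y : ℕ, x % 2 = 0 → y % 2 = 0 → x < y → y < 2 * m →
      ∃ t ≤ m, fld m (x + t) + 1 = fld m (y + t) ∨ fld m (y + t) + 1 = fld m (x + t) := by
    intro x y hx hy hxy hym
    by_cases h : (x + y) / 2 ≤ m
    · refine ⟨m - (x + y) / 2, by omega, ?_⟩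
      unfold fld
      rw [Nat.mod_eq_of_lt (by omega : x + (m - (x + y) / 2) < 2 * m),
        Nat.mod_eq_of_lt (by omega : y + (m - (x + y) / 2) < 2 * m)]
      split_ifs <;> omega
    · refine ⟨2 * m - (x + y) / 2, by omega, ?_⟩
      have e : (y + (2 * m - (x + y) / 2)) % (2 * m) = y - (x + y) / 2 := by
        have : y + (2 * m - (x + y) / 2) = (y - (x + y) / 2) + 2 * m := by omega
        rw [this, Nat.add_mod_right, Nat.mod_eq_of_lt (by omega)]
      unfold fld
      rw [e, Nat.mod_eq_of_lt (by omega : x + (2 * m - (x + y) / 2) < 2 * m)]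
      split_ifs <;> omega
  have hne : ph m i ≠ ph m j := by
    intro h
    have := congrArg (fld m) h
    rw [fld_ph hi, fld_ph hj] at this
    exact hij this
  rcases lt_or_gt_of_ne hne with h | h
  · exact key _ _ (ph_even hi) (ph_even hj) h (ph_lt hj)
  · obtain ⟨t, ht, h'⟩ := key _ _ (ph_even hj) (ph_even hi) h (ph_lt hi)
    exact ⟨t, ht, h'.symm⟩

lemma fld_ne {m i j t : ℕ} (hi : i < m) (hj : j < m) (hij : i ≠ j) :
    fld m (ph m i + t) ≠ fld m (ph m j + t) := by
  induction t with
  | zero => simpa [fld_ph hi, fld_ph hj] using hij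
  | succ t ih =>
    intro h
    rw [← add_assoc, ← add_assoc, ← sw_fld (by omega) (ph_even hi),
      ← sw_fld (by omega) (ph_even hj)] at h
    have := congrArg (sw m t) h
    rw [sw_sw (fld_lt (by omega)), sw_sw (fld_lt (by omega))] at this
    exact ih this

/-- number of vertex pairs visited by two agents during `T` rounds -/
lemma card_visited {m i j T : ℕ} [DecidableEq V] (_ : i < m) (hj : j < m) (hT : T ≤ 2 * m)
    (π : ℕ → V) (hinj : ∀ i < m, ∀ j < m, π i = π j → i = j) :
    T ≤ 4 * ((Finset.range T).image fun t =>
      s(π (fld m (ph m i + t)), π (fld m (ph m j + t)))).card := by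
  have hm : 0 < m := by omega
  have := Finset.card_le_mul_card_image (s := Finset.range T)
    (f := fun t => s(π (fld m (ph m i + t)), π (fld m (ph m j + t)))) 4 ?_
  · simpa using this
  intro b hb
  obtain ⟨t0, ht0, rfl⟩ := Finset.mem_image.1 hb
  -- the phase of agent `i` is one of four values
  set A := fld m (ph m i + t0) with hA
  set B := fld m (ph m j + t0) with hB
  have hsub : ((Finset.range T).filter fun t =>
      s(π (fld m (ph m i + t)), π (fld m (ph m j + t))) = s(π A, π B)).image
        (fun t => (ph m i + t) % (2 * m)) ⊆ {A, 2 * m - 1 - A, B, 2 * m - 1 - B} := by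
    intro y hy
    obtain ⟨t, ht, rfl⟩ := Finset.mem_image.1 hy
    rw [Finset.mem_filter] at ht
    have h2 : fld m (ph m i + t) = A ∨ fld m (ph m i + t) = B := by
      rcases Sym2.eq_iff.1 ht.2 with ⟨h, _⟩ | ⟨h, _⟩
      · exact Or.inl (hinj _ (fld_lt hm) _ (fld_lt hm) h)
      · exact Or.inr (hinj _ (fld_lt hm) _ (fld_lt hm) h)
    have hlt := Nat.mod_lt (ph m i + t) (by omega : 0 < 2 * m)
    have h3 : (ph m i + t) % (2 * m) = fld m (ph m i + t) ∨
        (ph m i + t) % (2 * m) = 2 * m - 1 - fld m (ph m i + t) := by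
      unfold fld; split_ifs <;> omega
    simp only [Finset.mem_insert, Finset.mem_singleton]
    rcases h2 with h2 | h2 <;> rw [h2] at h3 <;> tauto
  have hcard := (Finset.card_le_card hsub).trans Finset.card_le_four
  rwa [Finset.card_image_of_injOn] at hcard
  intro t ht t' ht' h
  have ht1 : t < T := by simpa using (Finset.mem_filter.1 ht).1
  have ht2 : t' < T := by simpa using (Finset.mem_filter.1 ht').1
  have : t ≡ t' [MOD 2 * m] := Nat.ModEq.add_left_cancel' _ h
  exact Nat.ModEq.eq_of_lt_of_lt this (by omega) (by omega)

end Rot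


/-! ### The random graph stages -/

section Stages

set_option linter.unusedSectionVars false

variable {V : Type*} [Fintype V] [DecidableEq V]

/-- graph of a set of pairs -/
def gr (S : Finset (Sym2 V)) : SimpleGraph V := SimpleGraph.fromEdgeSet (S : Set (Sym2 V))

lemma gr_adj {S : Finset (Sym2 V)} {a b : V} : (gr S).Adj a b ↔ s(a, b) ∈ S ∧ a ≠ b := by
  simp [gr]

/-- edge probabilities -/
noncomputable def qn (p : ℝ) (e : Sym2 V) : ℝ := if e.IsDiag then 0 else p

lemma qn_nonneg {p : ℝ} (h : 0 ≤ p) (e : Sym2 V) : 0 ≤ qn p e := by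
  unfold qn; split_ifs <;> simp [h]

lemma qn_le_one {p : ℝ} (h : p ≤ 1) (e : Sym2 V) : qn p e ≤ 1 := by
  unfold qn; split_ifs <;> simp [h]

lemma qn_lt_one {p : ℝ} (h : p < 1) (e : Sym2 V) : qn p e < 1 := by
  unfold qn; split_ifs <;> simp [h]

lemma pr_avoid_qn {p : ℝ} (h0 : 0 ≤ p) (h1 : p ≤ 1) (F : Finset (Sym2 V))
    (hF : ∀ e ∈ F, ¬ e.IsDiag) (K : ℕ) (hK : K ≤ F.card) :
    pr (qn p) (fun S => Disjoint S F) ≤ (1 - p) ^ K := by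
  rw [pr_avoid, Finset.prod_congr rfl (g := fun _ => 1 - p)]
  · rw [Finset.prod_const]
    exact pow_le_pow_of_le_one (by linarith) (by linarith) hK
  · intro e he
    simp [qn, hF e he]

lemma stage1 {p : ℝ} (h0 : 0 ≤ p) (h1 : p ≤ 1) (k : ℕ) :
    pr (qn p) (fun S : Finset (Sym2 V) => ¬ ∀ A B : Finset V, Disjoint A B → k ≤ A.card →
      k ≤ B.card → ∃ a ∈ A, ∃ b ∈ B, (gr S).Adj a b) ≤
      4 ^ (Fintype.card V) * (1 - p) ^ (k * k) := by
  set s : Finset (Finset V × Finset V) := Finset.univ.filter fun AB =>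
    Disjoint AB.1 AB.2 ∧ k ≤ AB.1.card ∧ k ≤ AB.2.card with hs
  set F : Finset V × Finset V → Finset (Sym2 V) := fun AB =>
    (AB.1 ×ˢ AB.2).image (fun ab => s(ab.1, ab.2)) with hF
  have e1 : pr (qn p) (fun S : Finset (Sym2 V) => ¬ ∀ A B : Finset V, Disjoint A B → k ≤ A.card →
      k ≤ B.card → ∃ a ∈ A, ∃ b ∈ B, (gr S).Adj a b) ≤
      pr (qn p) (fun S => ∃ AB ∈ s, Disjoint S (F AB)) := by
    refine pr_mono (qn_nonneg h0) (qn_le_one h1) ?_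
    intro S hS
    push Not at hS
    obtain ⟨A, B, hd, hA, hB, hno⟩ := hS
    refine ⟨(A, B), by simp [hs, hd, hA, hB], ?_⟩
    rw [Finset.disjoint_left]
    intro e he he2
    simp only [hF, Finset.mem_image, Finset.mem_product] at he2
    obtain ⟨⟨a, b⟩, ⟨ha, hb⟩, rfl⟩ := he2
    refine hno a ha b hb (gr_adj.2 ⟨he, ?_⟩)
    rintro rfl
    exact Finset.disjoint_left.1 hd ha hb
  have e2 : ∀ AB ∈ s, pr (qn p) (fun S => Disjoint S (F AB)) ≤ (1 - p) ^ (k * k) := by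
    rintro ⟨A, B⟩ hAB
    simp only [hs, Finset.mem_filter, Finset.mem_univ, true_and] at hAB
    obtain ⟨hd, hA, hB⟩ := hAB
    refine pr_avoid_qn h0 h1 _ ?_ _ ?_
    · intro e he
      simp only [hF, Finset.mem_image, Finset.mem_product] at he
      obtain ⟨⟨a, b⟩, ⟨ha, hb⟩, rfl⟩ := he
      rw [Sym2.mk_isDiag_iff]
      intro h
      exact Finset.disjoint_left.1 hd ha ((show a = b from h) ▸ hb)
    · simp only [hF]
      rw [Finset.card_image_of_injOn, Finset.card_product]
      · exact Nat.mul_le_mul hA hB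
      · rintro ⟨a, b⟩ hab ⟨a', b'⟩ hab' h
        simp only [Finset.coe_product, Set.mem_prod, Finset.mem_coe] at hab hab'
        rcases Sym2.eq_iff.1 h with ⟨h1, h2⟩ | ⟨h1, h2⟩
        · simp only at h1 h2; rw [h1, h2]
        · simp only at h1 h2
          exact absurd (h1 ▸ hab.1) (fun h => Finset.disjoint_left.1 hd h hab'.2)
  refine e1.trans ((pr_union_le (qn_nonneg h0) (qn_le_one h1) s _ _ e2).trans ?_)
  refine mul_le_mul_of_nonneg_right ?_ (pow_nonneg (by linarith) _)
  have : s.card ≤ 4 ^ Fintype.card V := by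
    refine (Finset.card_le_univ s).trans ?_
    rw [Fintype.card_prod, Fintype.card_finset, ← mul_pow]
    norm_num
  exact_mod_cast this

/-- probabilities supported on the pairs between `R` and `P` -/
noncomputable def qR (P R : Finset V) (p : ℝ) (e : Sym2 V) : ℝ :=
  if ∃ r ∈ R, ∃ v ∈ P, e = s(r, v) then p else 0

lemma qR_nonneg {p : ℝ} (h : 0 ≤ p) (P R : Finset V) (e : Sym2 V) : 0 ≤ qR P R p e := by
  unfold qR; split_ifs <;> simp [h]

lemma qR_le_one {p : ℝ} (h : p ≤ 1) (P R : Finset V) (e : Sym2 V) : qR P R p e ≤ 1 := by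
  unfold qR; split_ifs <;> simp [h]

/-- a private block for every vertex of `R` -/
def Assign (P R : Finset V) (blk : V → ℕ) (S : Finset (Sym2 V)) : Prop :=
  ∃ f : V → V, (∀ r ∈ R, f r ∈ P ∧ s(r, f r) ∈ S) ∧
    ∀ r ∈ R, ∀ r' ∈ R, blk (f r) = blk (f r') → r = r'

lemma greedy {p : ℝ} (h0 : 0 ≤ p) (h1 : p ≤ 1) (P : Finset V) (blk : V → ℕ)
    (hblk : ∀ c, (P.filter fun v => blk v = c).card ≤ 2) (M : ℕ) (R : Finset V) :
    Disjoint R P → M + 2 * R.card ≤ P.card →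
    pr (qR P R p) (fun S => ¬ Assign P R blk S) ≤ R.card * (1 - p) ^ M := by
  induction R using Finset.induction_on with
  | empty =>
    intro _ _
    have : ∀ S, Assign P ∅ blk S := fun S => ⟨id, by simp, by simp⟩
    simp [pr, this]
  | insert r R hr ih =>
    intro hd hM
    rw [Finset.card_insert_of_notMem hr] at hM ⊢
    rw [Finset.disjoint_insert_left] at hd
    have ih' := ih hd.2 (by omega)
    have hq : ∀ e, 1 - qR P (insert r R) p e = (1 - qR P R p e) * (1 - qR P {r} p e) := by
      intro e
      by_cases ha : ∃ r' ∈ R, ∃ v ∈ P, e = s(r', v)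
      · have hb : ¬ ∃ r' ∈ ({r} : Finset V), ∃ v ∈ P, e = s(r', v) := by
          rintro ⟨r1, hr1, v1, hv1, rfl⟩
          obtain ⟨r2, hr2, v2, hv2, he⟩ := ha
          rw [Finset.mem_singleton] at hr1
          subst hr1
          rcases Sym2.eq_iff.1 he with ⟨h, _⟩ | ⟨h, _⟩
          · exact hr (h ▸ hr2)
          · exact hd.1 (h ▸ hv2)
        have hc : ∃ r' ∈ insert r R, ∃ v ∈ P, e = s(r', v) := by
          obtain ⟨r2, hr2, x⟩ := ha
          exact ⟨r2, Finset.mem_insert_of_mem hr2, x⟩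
        simp [qR, if_pos ha, if_neg hb, if_pos hc, -Finset.mem_singleton, -Finset.mem_insert]
      · by_cases hb : ∃ r' ∈ ({r} : Finset V), ∃ v ∈ P, e = s(r', v)
        · have hc : ∃ r' ∈ insert r R, ∃ v ∈ P, e = s(r', v) := by
            obtain ⟨r2, hr2, x⟩ := hb
            exact ⟨r2, by simp at hr2; simp [hr2], x⟩
          simp [qR, if_neg ha, if_pos hb, if_pos hc, -Finset.mem_singleton, -Finset.mem_insert]
        · have hc : ¬ ∃ r' ∈ insert r R, ∃ v ∈ P, e = s(r', v) := by
            rintro ⟨r2, hr2, x⟩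
            rcases Finset.mem_insert.1 hr2 with h | h
            · exact hb ⟨r2, by simp [h], x⟩
            · exact ha ⟨r2, h, x⟩
          simp [qR, if_neg ha, if_neg hb, if_neg hc, -Finset.mem_singleton, -Finset.mem_insert]
    have := pr_two_stage hq (qR_nonneg h0 P R) (qR_le_one h1 P R)
      (A := fun S => ¬ Assign P (insert r R) blk S) (B := fun S => ¬ Assign P R blk S)
      (b := (1 - p) ^ M) (pow_nonneg (by linarith) _)
      (qR_nonneg h0 P {r}) (qR_le_one h1 P {r}) ih' ?_
    · refine this.trans (le_of_eq ?_)
      push_cast; ring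
    intro S1 hS1
    rw [not_not] at hS1
    obtain ⟨f, hf1, hf2⟩ := hS1
    set used : Finset ℕ := R.image (fun r => blk (f r)) with hused
    set W : Finset V := P.filter fun v => blk v ∉ used with hW
    set F : Finset (Sym2 V) := W.image (fun v => s(r, v)) with hF
    have hWc : M ≤ W.card := by
      have hc1 : (P.filter fun v => blk v ∈ used).card ≤ 2 * used.card := by
        apply Finset.card_le_mul_card_image_of_maps_to (f := blk)
        · intro v hv; exact (Finset.mem_filter.1 hv).2
        · intro c _
          refine le_trans (Finset.card_le_card ?_) (hblk c)
          intro v hv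
          simp only [Finset.mem_filter] at hv ⊢
          exact ⟨hv.1.1, hv.2⟩
      have hc2 : used.card ≤ R.card := Finset.card_image_le
      have hc3 := Finset.card_filter_add_card_filter_not (s := P) (fun v => blk v ∈ used)
      simp only [hW]
      omega
    have hFc : F.card = W.card := by
      apply Finset.card_image_of_injective
      intro v v' h
      have h' : v = v' ∨ r = v' ∧ v = r := by simpa using h
      rcases h' with h' | ⟨h', h''⟩
      · exact h'
      · rw [h'', h']
    have step : pr (qR P {r} p) (fun S2 => ¬ Assign P (insert r R) blk (S1 ∪ S2)) ≤
        pr (qR P {r} p) (fun S2 => Disjoint S2 F) := by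
      refine pr_mono (qR_nonneg h0 P {r}) (qR_le_one h1 P {r}) ?_
      intro S2 hS2
      by_contra hnd
      rw [Finset.not_disjoint_iff] at hnd
      obtain ⟨e, he, heF⟩ := hnd
      obtain ⟨v, hv, rfl⟩ := Finset.mem_image.1 heF
      obtain ⟨hvP, hvu⟩ := Finset.mem_filter.1 hv
      have hne : ∀ x ∈ R, x ≠ r := fun x hx h => hr (h ▸ hx)
      have hfr : ∀ x ∈ R, blk (f x) ≠ blk v := fun x hx h =>
        hvu (Finset.mem_image.2 ⟨x, hx, h⟩)
      refine hS2 ⟨Function.update f r v, ?_, ?_⟩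
      · intro x hx
        rcases Finset.mem_insert.1 hx with rfl | hx
        · simp [hvP, he]
        · rw [Function.update_of_ne (hne x hx)]
          exact ⟨(hf1 x hx).1, Finset.mem_union_left _ (hf1 x hx).2⟩
      · intro x hx y hy h
        rcases Finset.mem_insert.1 hx with rfl | hx' <;>
          rcases Finset.mem_insert.1 hy with rfl | hy'
        · rfl
        · rw [Function.update_self, Function.update_of_ne (hne y hy')] at h
          exact absurd h.symm (hfr y hy')
        · rw [Function.update_self, Function.update_of_ne (hne x hx')] at h
          exact absurd h (hfr x hx')
        · rw [Function.update_of_ne (hne x hx'), Function.update_of_ne (hne y hy')] at h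
          exact hf2 x hx' y hy' h
    refine step.trans ?_
    rw [pr_avoid, Finset.prod_congr rfl (g := fun _ => 1 - p)]
    · rw [Finset.prod_const]
      exact pow_le_pow_of_le_one (by linarith) (by linarith) (by omega)
    · intro e he
      obtain ⟨v, hv, rfl⟩ := Finset.mem_image.1 he
      have : ∃ r' ∈ ({r} : Finset V), ∃ v' ∈ P, s(r, v) = s(r', v') :=
        ⟨r, by simp, v, (Finset.mem_filter.1 hv).1, rfl⟩
      simp only [qR, if_pos this]

lemma stage2 {p : ℝ} (h0 : 0 ≤ p) (h1 : p < 1) (P : Finset V) (blk : V → ℕ)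
    (hblk : ∀ c, (P.filter fun v => blk v = c).card ≤ 2) (M : ℕ) (R : Finset V)
    (hd : Disjoint R P) (hM : M + 2 * R.card ≤ P.card) :
    pr (qn p) (fun S => ¬ Assign P R blk S) ≤ R.card * (1 - p) ^ M := by
  refine le_trans (pr_anti (qR_nonneg h0 P R) ?_ (qn_lt_one h1) ?_)
    (greedy h0 h1.le P blk hblk M R hd hM)
  · intro e
    unfold qR
    split_ifs with h
    · obtain ⟨r, hr, v, hv, rfl⟩ := h
      have : r ≠ v := by
        rintro rfl; exact Finset.disjoint_left.1 hd hr hv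
      simp [qn, this]
    · exact qn_nonneg h0 e
  · intro S T hST hT hS
    obtain ⟨f, hf1, hf2⟩ := hS
    exact hT ⟨f, fun r hr => ⟨(hf1 r hr).1, hST (hf1 r hr).2⟩, hf2⟩

lemma stage3 {p : ℝ} (h0 : 0 ≤ p) (h1 : p ≤ 1) (m K : ℕ) (hK : 4 * K ≤ 2 * m)
    (π : ℕ → V) (hinj : ∀ i < m, ∀ j < m, π i = π j → i = j) :
    pr (qn p) (fun S => ∃ i < m, ∃ j < m, i ≠ j ∧ ∀ t < 4 * K,
      s(π (fld m (ph m i + t)), π (fld m (ph m j + t))) ∉ S) ≤ (m : ℝ) ^ 2 * (1 - p) ^ K := by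
  set s : Finset (ℕ × ℕ) := (Finset.range m ×ˢ Finset.range m).filter fun ij => ij.1 ≠ ij.2 with hs
  set F : ℕ × ℕ → Finset (Sym2 V) := fun ij => (Finset.range (4 * K)).image fun t =>
      s(π (fld m (ph m ij.1 + t)), π (fld m (ph m ij.2 + t))) with hF
  have e1 : pr (qn p) (fun S => ∃ i < m, ∃ j < m, i ≠ j ∧ ∀ t < 4 * K,
      s(π (fld m (ph m i + t)), π (fld m (ph m j + t))) ∉ S) ≤
      pr (qn p) (fun S => ∃ ij ∈ s, Disjoint S (F ij)) := by
    refine pr_mono (qn_nonneg h0) (qn_le_one h1) ?_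
    rintro S ⟨i, hi, j, hj, hij, hno⟩
    refine ⟨(i, j), by simp [hs, hi, hj, hij], ?_⟩
    rw [Finset.disjoint_right]
    intro e he
    obtain ⟨t, ht, rfl⟩ := Finset.mem_image.1 he
    exact hno t (Finset.mem_range.1 ht)
  have e2 : ∀ ij ∈ s, pr (qn p) (fun S => Disjoint S (F ij)) ≤ (1 - p) ^ K := by
    rintro ⟨i, j⟩ hij
    simp only [hs, Finset.mem_filter, Finset.mem_product, Finset.mem_range] at hij
    obtain ⟨⟨hi, hj⟩, hij⟩ := hij
    refine pr_avoid_qn h0 h1 _ ?_ _ ?_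
    · intro e he
      obtain ⟨t, ht, rfl⟩ := Finset.mem_image.1 he
      rw [Sym2.mk_isDiag_iff]
      intro h
      exact fld_ne hi hj hij (hinj _ (fld_lt (by omega)) _ (fld_lt (by omega)) h)
    · have := card_visited hi hj hK π hinj
      simp only [hF]
      omega
  refine e1.trans ((pr_union_le (qn_nonneg h0) (qn_le_one h1) s _ _ e2).trans ?_)
  refine mul_le_mul_of_nonneg_right ?_ (pow_nonneg (by linarith) _)
  have : s.card ≤ m ^ 2 := by
    refine (Finset.card_filter_le _ _).trans ?_
    simp [sq]
  exact_mod_cast this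

end Stages


/-! ### Assembly -/

section Assembly

variable {V : Type*} [Fintype V] [DecidableEq V]

/-- deterministic part: path, private blocks and acquaintance on the path give a strategy -/
lemma good_of_structure (G : SimpleGraph V) (h : ℕ) (π : ℕ → V)
    (hinj : ∀ i < 2 * h, ∀ j < 2 * h, π i = π j → i = j)
    (hadj : ∀ i, i + 1 < 2 * h → G.Adj (π i) (π (i + 1)))
    (idx : V → ℕ) (hidx : ∀ i < 2 * h, idx (π i) = i)
    (f : V → V) (P : Finset V) (hP : ∀ v, v ∈ P ↔ ∃ i < 2 * h, π i = v)
    (hf : ∀ r, r ∉ P → f r ∈ P ∧ G.Adj r (f r))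
    (hb : ∀ r, r ∉ P → ∀ r', r' ∉ P → idx (f r) / 2 = idx (f r') / 2 → r = r') (T : ℕ)
    (hQ : ∀ i < 2 * h, ∀ j < 2 * h, i ≠ j → ∃ t ≤ T,
      G.Adj (π (fld (2 * h) (ph (2 * h) i + t))) (π (fld (2 * h) (ph (2 * h) j + t)))) :
    Good G (5 * T + 3) := by
  obtain ⟨L, hL, hL1, hL2⟩ := exists_rotL G (2 * h) π hinj hadj T
  subst hL
  set pt : ℕ → ℕ := fun i => if i % 2 = 0 then i + 1 else i - 1 with hpt
  have pt_lt : ∀ i < 2 * h, pt i < 2 * h := by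
    intro i hi; simp only [hpt]; split_ifs <;> omega
  have pt_half : ∀ i, pt i / 2 = i / 2 := by
    intro i; simp only [hpt]; split_ifs <;> omega
  have pt_ne : ∀ i, pt i ≠ i := by
    intro i; simp only [hpt]; split_ifs <;> omega
  have pt_adj : ∀ i < 2 * h, G.Adj (π i) (π (pt i)) := by
    intro i hi
    simp only [hpt]
    split_ifs with h0
    · exact hadj i (by omega)
    · have := hadj (i - 1) (by omega)
      rw [Nat.sub_add_cancel (by omega)] at this
      exact this.symm
  have hu : ∀ r, r ∉ P → idx (f r) < 2 * h ∧ π (idx (f r)) = f r := by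
    intro r hr
    obtain ⟨i, hi, he⟩ := (hP _).1 (hf r hr).1
    rw [← he, hidx i hi]
    exact ⟨hi, rfl⟩
  refine good_of_phases G {r | r ∉ P} f (fun r => π (pt (idx (f r)))) ?_ ?_ ?_ ?_ ?_ ?_ ?_ L hL1 ?_
  · intro r hr hh; exact hh (hf r hr).1
  · intro r hr hh; exact hh ((hP _).2 ⟨_, pt_lt _ (hu r hr).1, rfl⟩)
  · intro r hr r' hr' he
    exact hb r hr r' hr' (by rw [he])
  · intro r hr r' hr' he
    have := hinj _ (pt_lt _ (hu r hr).1) _ (pt_lt _ (hu r' hr').1) he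
    apply hb r hr r' hr'
    rw [← pt_half, this, pt_half]
  · intro r hr r' hr' he
    rw [← (hu r hr).2] at he
    have := hinj _ (hu r hr).1 _ (pt_lt _ (hu r' hr').1) he
    have hrr : r = r' := by
      apply hb r hr r' hr'
      rw [this, pt_half]
    subst hrr
    exact pt_ne _ this.symm
  · intro r hr; exact (hf r hr).2
  · intro r hr
    have := pt_adj _ (hu r hr).1
    rwa [(hu r hr).2] at this
  · intro a b ha hb' hab
    have ha : a ∈ P := not_not.1 ha
    have hb' : b ∈ P := not_not.1 hb'
    obtain ⟨i, hi, rfl⟩ := (hP a).1 ha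
    obtain ⟨j, hj, rfl⟩ := (hP b).1 hb'
    obtain ⟨t, ht, hadj'⟩ := hQ i hi j hj (fun h => hab (by rw [h]))
    apply acqL_take G L t
    rw [hL2 t ht i hi, hL2 t ht j hj]
    exact hadj'

lemma assembly [Nonempty V] {n : ℕ} (hn : Fintype.card V = n) {p p1 p2 p3 : ℝ}
    (hp : 1 - p = (1 - p1) * ((1 - p2) * (1 - p3)))
    (h10 : 0 ≤ p1) (h11 : p1 ≤ 1) (h20 : 0 ≤ p2) (h21 : p2 < 1) (h30 : 0 ≤ p3) (h31 : p3 ≤ 1)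
    (k M K : ℕ) (hM : M + 6 * k + 3 ≤ n) :
    pr (qn p) (fun S : Finset (Sym2 V) => ¬ Good (gr S) (5 * (4 * K) + 3)) ≤
      4 ^ n * (1 - p1) ^ (k * k) + (n * (1 - p2) ^ M + (n : ℝ) ^ 2 * (1 - p3) ^ K) := by
  have pn2 : 0 ≤ (1 - p2) ^ M := pow_nonneg (by linarith) _
  have pn3 : 0 ≤ (1 - p3) ^ K := pow_nonneg (by linarith) _
  have hq : ∀ e : Sym2 V, 1 - qn p e = (1 - qn p1 e) * (1 - qn (1 - (1 - p2) * (1 - p3)) e) := by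
    intro e
    unfold qn
    split_ifs
    · simp
    · rw [hp]; ring
  have hq' : ∀ e : Sym2 V,
      1 - qn (1 - (1 - p2) * (1 - p3)) e = (1 - qn p2 e) * (1 - qn p3 e) := by
    intro e
    unfold qn
    split_ifs
    · simp
    · ring
  have hst := stage1 (V := V) h10 h11 k
  rw [hn] at hst
  refine pr_two_stage hq (qn_nonneg h10) (qn_le_one h11) (by positivity)
    (qn_nonneg (by nlinarith)) (qn_le_one (by nlinarith)) hst ?_
  intro S1 hS1
  rw [not_not] at hS1
  obtain ⟨h, π, hinj, hadj, hcard⟩ := exists_even_path (gr S1) k hS1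
  rw [hn] at hcard
  obtain ⟨idx, hidx⟩ : ∃ idx : V → ℕ, ∀ i < 2 * h, idx (π i) = i := by
    refine ⟨Function.invFunOn π (Set.Iio (2 * h)), fun i hi => ?_⟩
    have hm : ∃ j ∈ Set.Iio (2 * h), π j = π i := ⟨i, hi, rfl⟩
    exact hinj _ (Function.invFunOn_mem hm) i hi (Function.invFunOn_eq hm)
  set P : Finset V := (Finset.range (2 * h)).image π with hPdef
  have hP : ∀ v, v ∈ P ↔ ∃ i < 2 * h, π i = v := by
    intro v; simp [hPdef]
  have hPc : P.card = 2 * h := by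
    rw [hPdef, Finset.card_image_of_injOn, Finset.card_range]
    intro i hi j hj hij
    exact hinj i (by simpa using hi) j (by simpa using hj) hij
  set R : Finset V := Finset.univ \ P with hR
  have hRP : R.card + P.card = n := by
    rw [hR, Finset.card_sdiff_add_card_eq_card (Finset.subset_univ P), Finset.card_univ, hn]
  have hblk : ∀ c, (P.filter fun v => idx v / 2 = c).card ≤ 2 := by
    intro c
    have : P.filter (fun v => idx v / 2 = c) ⊆ {π (2 * c), π (2 * c + 1)} := by
      intro v hv
      obtain ⟨hv1, hv2⟩ := Finset.mem_filter.1 hv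
      obtain ⟨i, hi, rfl⟩ := (hP v).1 hv1
      rw [hidx i hi] at hv2
      have : i = 2 * c ∨ i = 2 * c + 1 := by omega
      rcases this with rfl | rfl <;> simp
    exact (Finset.card_le_card this).trans Finset.card_le_two
  have hs2 := stage2 h20 h21 P (fun v => idx v / 2) hblk M R Finset.sdiff_disjoint (by omega)
  have hs2' : pr (qn p2) (fun S => ¬ Assign P R (fun v => idx v / 2) S) ≤ n * (1 - p2) ^ M := by
    refine hs2.trans (mul_le_mul_of_nonneg_right ?_ pn2)
    exact_mod_cast (by omega : R.card ≤ n)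
  refine pr_two_stage hq' (qn_nonneg h20) (qn_le_one h21.le) (by positivity)
    (qn_nonneg h30) (qn_le_one h31) hs2' ?_
  intro S2 hS2
  rw [not_not] at hS2
  obtain ⟨f, hf1, hf2⟩ := hS2
  -- a sufficient condition for goodness
  have suff : ∀ S3 : Finset (Sym2 V),
      (∀ i < 2 * h, ∀ j < 2 * h, i ≠ j → ∃ t ≤ 4 * K, (gr (S1 ∪ (S2 ∪ S3))).Adj
        (π (fld (2 * h) (ph (2 * h) i + t))) (π (fld (2 * h) (ph (2 * h) j + t)))) →
      Good (gr (S1 ∪ (S2 ∪ S3))) (5 * (4 * K) + 3) := by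
    intro S3 hQ
    refine good_of_structure _ h π hinj ?_ idx hidx f P hP ?_ ?_ _ hQ
    · intro i hi
      have := gr_adj.1 (hadj i hi)
      exact gr_adj.2 ⟨by simp [this.1], this.2⟩
    · intro r hr
      have hrR : r ∈ R := by simp [hR, hr]
      have := hf1 r hrR
      refine ⟨this.1, gr_adj.2 ⟨by simp [this.2], ?_⟩⟩
      intro he
      exact hr (he ▸ this.1)
    · intro r hr r' hr' he
      exact hf2 r (by simp [hR, hr]) r' (by simp [hR, hr']) he
  by_cases hK : n ≤ 4 * K
  · have : ∀ S3 : Finset (Sym2 V), Good (gr (S1 ∪ (S2 ∪ S3))) (5 * (4 * K) + 3) := by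
      intro S3
      apply suff
      intro i hi j hj hij
      obtain ⟨t, ht, hmeet⟩ := fld_meet hi hj hij
      refine ⟨t, by omega, ?_⟩
      have mono : ∀ a b, (gr S1).Adj a b → (gr (S1 ∪ (S2 ∪ S3))).Adj a b := by
        intro a b hab
        have := gr_adj.1 hab
        exact gr_adj.2 ⟨by simp [this.1], this.2⟩
      apply mono
      have l1 : fld (2 * h) (ph (2 * h) i + t) < 2 * h := fld_lt (by omega)
      have l2 : fld (2 * h) (ph (2 * h) j + t) < 2 * h := fld_lt (by omega)
      rcases hmeet with hm | hm
      · rw [← hm]; exact hadj _ (by omega)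
      · rw [← hm]; exact (hadj _ (by omega)).symm
    have hz : pr (qn p3) (fun S3 : Finset (Sym2 V) =>
        ¬ Good (gr (S1 ∪ (S2 ∪ S3))) (5 * (4 * K) + 3)) = 0 := by
      simp [pr, this]
    rw [hz]
    positivity
  · have hs3 := stage3 h30 h31 (2 * h) K (by omega) π hinj
    have hle : ((2 * h : ℕ) : ℝ) ^ 2 * (1 - p3) ^ K ≤ (n : ℝ) ^ 2 * (1 - p3) ^ K := by
      refine mul_le_mul_of_nonneg_right ?_ pn3
      have : 2 * h ≤ n := by omega
      gcongr
    refine le_trans (pr_mono (qn_nonneg h30) (qn_le_one h31) ?_) (hs3.trans hle)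
    intro S3 hbad
    by_contra hcon
    push Not at hcon
    apply hbad
    apply suff
    intro i hi j hj hij
    obtain ⟨t, ht, hmem⟩ := hcon i hi j hj hij
    refine ⟨t, ht.le, gr_adj.2 ⟨by simp [hmem], ?_⟩⟩
    intro he
    exact fld_ne hi hj hij (hinj _ (fld_lt (by omega)) _ (fld_lt (by omega)) he)

lemma gnp_eq (n : ℕ) (p : ℝ) (A : SimpleGraph (Fin n) → Prop) :
    gnpProb n p A = pr (qn p) (fun S : Finset (Sym2 (Fin n)) => A (gr S)) := by
  unfold gnpProb pr
  have hgr : ∀ G : SimpleGraph (Fin n), gr G.edgeFinset = G := by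
    intro G; simp [gr]
  refine Fintype.sum_of_injective (fun G : SimpleGraph (Fin n) => G.edgeFinset) ?_ _ _ ?_ ?_
  · intro G G' h
    simp only at h
    rw [← hgr G, ← hgr G', h]
  · intro S hS
    have : ∃ e ∈ S, e.IsDiag := by
      by_contra hcon
      push Not at hcon
      apply hS
      refine ⟨gr S, ?_⟩
      ext e
      rw [SimpleGraph.mem_edgeFinset]
      induction e using Sym2.ind with
      | _ a b =>
        rw [SimpleGraph.mem_edgeSet, gr_adj]
        constructor
        · exact fun h => h.1
        · intro h
          refine ⟨h, fun hab => hcon _ h ?_⟩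
          rw [Sym2.mk_isDiag_iff]
          exact hab
    obtain ⟨e, he, hd⟩ := this
    have : wt (qn p) S = 0 := by
      apply Finset.prod_eq_zero (Finset.mem_univ e)
      simp [he, qn, hd]
    simp [this]
  · intro G
    have hw : wt (qn p) G.edgeFinset =
        p ^ G.edgeSet.ncard * (1 - p) ^ (n.choose 2 - G.edgeSet.ncard) := by
      set D : Finset (Sym2 (Fin n)) := Finset.univ.filter fun e => ¬ e.IsDiag with hD
      have hDc : D.card = n.choose 2 := by
        have := Sym2.card_subtype_not_diag (α := Fin n)
        rw [Fintype.card_subtype, Fintype.card_fin] at this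
        rw [← this, hD]
      have hsub : G.edgeFinset ⊆ D := by
        intro e he
        simp only [hD, Finset.mem_filter, Finset.mem_univ, true_and]
        exact G.not_isDiag_of_mem_edgeFinset he
      have hEc : G.edgeSet.ncard = G.edgeFinset.card := by
        rw [← SimpleGraph.coe_edgeFinset, Set.ncard_coe_finset]
      rw [hEc, ← hDc, ← Finset.card_sdiff_of_subset hsub]
      unfold wt
      rw [← Finset.prod_subset (Finset.subset_univ D)]
      · rw [← Finset.prod_sdiff hsub, mul_comm]
        congr 1
        · rw [← Finset.prod_const]
          refine Finset.prod_congr rfl fun e he => ?_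
          have hd : ¬ e.IsDiag := by
            have := hsub he
            simpa [hD] using this
          rw [if_pos he]; simp [qn, hd]
        · rw [← Finset.prod_const]
          refine Finset.prod_congr rfl fun e he => ?_
          obtain ⟨h1, h2⟩ := Finset.mem_sdiff.1 he
          have hd : ¬ e.IsDiag := by
            simpa [hD] using h1
          rw [if_neg h2]; simp [qn, hd]
      · intro e _ he
        have hd : e.IsDiag := by
          by_contra hh; exact he (by simp [hD, hh])
        have : e ∉ G.edgeFinset := fun h => he (hsub h)
        rw [if_neg this]; simp [qn, hd]
    have hA : A (gr G.edgeFinset) ↔ A G := by rw [hgr G]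
    by_cases h : A G
    · rw [if_pos h, if_pos (hA.2 h), hw]
    · rw [if_neg h, if_neg (fun h' => h (hA.1 h'))]

end Assembly


/-! ### Asymptotics -/

lemma pow_one_sub_le {x : ℝ} (hx : x ≤ 1) (k : ℕ) : (1 - x) ^ k ≤ Real.exp (-(x * k)) := by
  have h1 : 1 - x ≤ Real.exp (-x) := by
    have := Real.add_one_le_exp (-x); linarith
  calc (1 - x) ^ k ≤ (Real.exp (-x)) ^ k := pow_le_pow_left₀ (by linarith) h1 k
    _ = Real.exp (-(x * k)) := by rw [← Real.exp_nat_mul]; ring_nf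

/-- choice of the second edge probability -/
lemma exists_p2 {p c : ℝ} (hp0 : 0 < p) (hp1 : p < 1) (hc0 : 0 ≤ c) (hc : c ≤ 1 / 2) :
    ∃ p2 : ℝ, (1 - 2 * c) * p ≤ p2 ∧ p2 < 1 ∧
      1 - p = (1 - c * p) * ((1 - p2) * (1 - c * p)) := by
  have hcp : c * p < 1 := by nlinarith
  have hpos : 0 < (1 - c * p) ^ 2 := by
    have : 0 < 1 - c * p := by linarith
    positivity
  refine ⟨1 - (1 - p) / (1 - c * p) ^ 2, ?_, ?_, ?_⟩
  · have : (1 - p) / (1 - c * p) ^ 2 ≤ 1 - (1 - 2 * c) * p := by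
      rw [div_le_iff₀ hpos]
      have h1 : 0 ≤ 1 - (1 - 2 * c) * p := by nlinarith
      have h2 : 1 - 2 * (c * p) ≤ (1 - c * p) ^ 2 := by nlinarith [sq_nonneg (c * p)]
      have h3 := mul_le_mul_of_nonneg_left h2 h1
      have h4 : 0 ≤ 2 * c * p * p * (1 - 2 * c) := by
        have : 0 ≤ 1 - 2 * c := by linarith
        positivity
      nlinarith
    linarith
  · have : 0 < (1 - p) / (1 - c * p) ^ 2 := div_pos (by linarith) hpos
    linarith
  · have e : (1 - p) / (1 - c * p) ^ 2 * (1 - c * p) ^ 2 = 1 - p := div_mul_cancel₀ _ hpos.ne'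
    rw [sub_sub_cancel]
    linear_combination (-1) * e

lemma main_bound {ε : ℝ} (hε : 0 < ε) (hε1 : ε < 1) {n : ℕ} {p : ℝ} (hn : 3 ≤ n)
    (hn1 : 3 ≤ (ε / 64) * n)
    (hL : 4 * (Real.log 4 + 1) ≤ (ε / 16) * (ε / 64) ^ 2 * Real.log n)
    (hp : (1 + ε) * Real.log n / n ≤ p) (hp1 : p ≤ 1 - ε) (K : ℕ)
    (hK : 3 * Real.log n ≤ (ε / 16) * p * K) :
    pr (qn p) (fun S : Finset (Sym2 (Fin n)) => ¬ Good (gr S) (5 * (4 * K) + 3)) ≤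
      Real.exp (-(n : ℝ)) + (Real.exp (-(ε / 2 * Real.log n)) + Real.exp (-Real.log n)) := by
  have hnpos : (0 : ℝ) < n := by positivity
  have hlog : 0 < Real.log n := Real.log_pos (by exact_mod_cast (by omega : 1 < n))
  have hp0 : 0 < p := lt_of_lt_of_le (by positivity) hp
  haveI : Nonempty (Fin n) := ⟨⟨0, by omega⟩⟩
  obtain ⟨p2, h2a, h2b, h2c⟩ := exists_p2 (c := ε / 16) hp0 (by linarith) (by positivity)
    (by linarith)
  have h20 : 0 ≤ p2 := le_trans (mul_nonneg (by linarith) hp0.le) h2a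
  have hcp : ε / 16 * p ≤ 1 := by nlinarith
  have hcp0 : 0 ≤ ε / 16 * p := by positivity
  set k : ℕ := ⌊(ε / 64) * n⌋₊ with hk
  have hk1 : (k : ℝ) ≤ (ε / 64) * n := Nat.floor_le (by positivity)
  have hk2 : (ε / 64) * n < k + 1 := Nat.lt_floor_add_one _
  have hk3 : (ε / 64) * n / 2 ≤ k := by linarith
  have hkn : 6 * k + 3 ≤ n := by
    have : (6 * k + 3 : ℝ) ≤ n := by nlinarith
    exact_mod_cast this
  have hpn : (1 + ε) * Real.log n ≤ p * n := by
    rwa [div_le_iff₀ hnpos] at hp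
  refine (assembly (Fintype.card_fin n) h2c hcp0 hcp h20 h2b hcp0 hcp k (n - 6 * k - 3) K
    (by omega)).trans ?_
  have hexp : Real.exp (Real.log n) = n := Real.exp_log hnpos
  refine add_le_add ?_ (add_le_add ?_ ?_)
  · calc (4 : ℝ) ^ n * (1 - ε / 16 * p) ^ (k * k)
        ≤ Real.exp (n * Real.log 4) * Real.exp (-(ε / 16 * p * ((k * k : ℕ) : ℝ))) := by
          refine mul_le_mul (le_of_eq ?_) (pow_one_sub_le hcp _)
            (pow_nonneg (by linarith) _) (Real.exp_nonneg _)
          rw [Real.exp_nat_mul, Real.exp_log (by norm_num)]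
      _ ≤ Real.exp (-(n : ℝ)) := by
          rw [← Real.exp_add, Real.exp_le_exp]
          push_cast
          have hkk : ((ε / 64) * n / 2) * ((ε / 64) * n / 2) ≤ (k : ℝ) * k :=
            mul_le_mul hk3 hk3 (by positivity) (by positivity)
          have h3 := mul_le_mul_of_nonneg_left hkk hcp0
          have h4 : Real.log n ≤ p * n := by nlinarith
          have h5 := mul_le_mul_of_nonneg_left h4
            (by positivity : 0 ≤ (ε / 16) * (ε / 64) ^ 2 * n / 4)
          have h6 := mul_le_mul_of_nonneg_right hL hnpos.le
          nlinarith
  · calc (n : ℝ) * (1 - p2) ^ (n - 6 * k - 3)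
        ≤ Real.exp (Real.log n) * Real.exp (-(p2 * ((n - 6 * k - 3 : ℕ) : ℝ))) := by
          rw [hexp]
          exact mul_le_mul_of_nonneg_left (pow_one_sub_le h2b.le _) hnpos.le
      _ ≤ Real.exp (-(ε / 2 * Real.log n)) := by
          rw [← Real.exp_add, Real.exp_le_exp]
          have hM : (1 - 7 * (ε / 64)) * n ≤ ((n - 6 * k - 3 : ℕ) : ℝ) := by
            rw [Nat.sub_sub, Nat.cast_sub hkn]
            push_cast
            nlinarith
          have h7 : 0 ≤ 1 - 7 * (ε / 64) := by linarith
          have h8 : (1 - 2 * (ε / 16)) * p * ((1 - 7 * (ε / 64)) * n) ≤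
              p2 * ((n - 6 * k - 3 : ℕ) : ℝ) :=
            mul_le_mul h2a hM (by positivity) h20
          have h9 : 0 ≤ (1 - 2 * (ε / 16)) * (1 - 7 * (ε / 64)) :=
            mul_nonneg (by linarith) h7
          have h10 := mul_le_mul_of_nonneg_left hpn h9
          have h11 : 1 + ε / 2 ≤ (1 - 2 * (ε / 16)) * (1 - 7 * (ε / 64)) * (1 + ε) := by
            have ha : 1 - ε / 4 ≤ (1 - 2 * (ε / 16)) * (1 - 7 * (ε / 64)) := by nlinarith
            have hb := mul_le_mul_of_nonneg_right ha (by linarith : 0 ≤ 1 + ε)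
            nlinarith
          have h12 := mul_le_mul_of_nonneg_right h11 hlog.le
          nlinarith
  · calc (n : ℝ) ^ 2 * (1 - ε / 16 * p) ^ K
        ≤ Real.exp (2 * Real.log n) * Real.exp (-(ε / 16 * p * K)) := by
          refine mul_le_mul (le_of_eq ?_) (pow_one_sub_le hcp _)
            (pow_nonneg (by linarith) _) (Real.exp_nonneg _)
          rw [two_mul, Real.exp_add, hexp, sq]
      _ ≤ Real.exp (-Real.log n) := by
          rw [← Real.exp_add, Real.exp_le_exp]
          linarith


/-- For every `ε > 0` there is a constant `C > 0` such that: whenever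
`(1+ε) log n / n ≤ p(n) ≤ 1 − ε` for all `n`, a.a.s. `G ∈ G(n, p(n))` is connected and
satisfies `AC(G) ≤ C log n / p(n)`. -/
theorem AC_gnp_upper (ε : ℝ) (hε : 0 < ε) :
    ∃ C : ℝ, 0 < C ∧ ∀ p : ℕ → ℝ,
      (∀ n : ℕ, (1 + ε) * Real.log n / n ≤ p n ∧ p n ≤ 1 - ε) →
      Filter.Tendsto
        (fun n : ℕ => gnpProb n (p n) (fun G : SimpleGraph (Fin n) =>
          G.Connected ∧ (AC G : ℝ) ≤ C * Real.log n / p n))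
        Filter.atTop (nhds 1) := by
  refine ⟨20 * (48 / ε) + 23, by positivity, ?_⟩
  intro p hp
  have hε1 : ε < 1 := by
    have h2 := hp 2
    have : 0 < (1 + ε) * Real.log (2 : ℕ) / (2 : ℕ) := by
      have : 0 < Real.log (2 : ℕ) := Real.log_pos (by norm_num)
      positivity
    linarith [h2.1, h2.2]
  have hlogT : Filter.Tendsto (fun n : ℕ => Real.log n) Filter.atTop Filter.atTop :=
    Real.tendsto_log_atTop.comp tendsto_natCast_atTop_atTop
  have hnT : Filter.Tendsto (fun n : ℕ => (n : ℝ)) Filter.atTop Filter.atTop :=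
    tendsto_natCast_atTop_atTop
  -- the lower bound tends to one
  have hlow : Filter.Tendsto (fun n : ℕ => 1 - (Real.exp (-(n : ℝ)) +
      (Real.exp (-(ε / 2 * Real.log n)) + Real.exp (-Real.log n)))) Filter.atTop (nhds 1) := by
    have t1 : Filter.Tendsto (fun n : ℕ => Real.exp (-(n : ℝ))) Filter.atTop (nhds 0) :=
      Real.tendsto_exp_neg_atTop_nhds_zero.comp hnT
    have t2 : Filter.Tendsto (fun n : ℕ => Real.exp (-(ε / 2 * Real.log n)))
        Filter.atTop (nhds 0) :=
      Real.tendsto_exp_neg_atTop_nhds_zero.comp (hlogT.const_mul_atTop (by positivity))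
    have t3 : Filter.Tendsto (fun n : ℕ => Real.exp (-Real.log n)) Filter.atTop (nhds 0) :=
      Real.tendsto_exp_neg_atTop_nhds_zero.comp hlogT
    have := (t1.add (t2.add t3)).const_sub 1
    simpa using this
  refine tendsto_of_tendsto_of_tendsto_of_le_of_le' hlow tendsto_const_nhds ?_ ?_
  · have e1 := hnT.eventually_ge_atTop (3 / (ε / 64))
    have e2 := hlogT.eventually_ge_atTop (4 * (Real.log 4 + 1) / ((ε / 16) * (ε / 64) ^ 2))
    have e3 := hlogT.eventually_ge_atTop 1
    filter_upwards [e1, e2, e3, Filter.eventually_ge_atTop 3] with n h1 h2 h3 hn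
    obtain ⟨hpa, hpb⟩ := hp n
    have hnpos : (0 : ℝ) < n := by positivity
    have hp0 : 0 < p n := lt_of_lt_of_le (by positivity) hpa
    rw [div_le_iff₀ (by positivity)] at h1 h2
    set K : ℕ := ⌈48 / ε * (Real.log n / p n)⌉₊ with hK
    have hK1 : 48 / ε * (Real.log n / p n) ≤ K := Nat.le_ceil _
    have hK2 : (K : ℝ) < 48 / ε * (Real.log n / p n) + 1 := Nat.ceil_lt_add_one (by positivity)
    have hb := main_bound hε hε1 hn (by linarith) (by linarith) hpa hpb K (by
      have := mul_le_mul_of_nonneg_left hK1 (by positivity : 0 ≤ ε / 16 * p n)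
      refine le_trans (le_of_eq ?_) this
      field_simp
      norm_num)
    rw [gnp_eq, pr_compl]
    have hq0 := qn_nonneg (V := Fin n) hp0.le
    have hq1 := qn_le_one (V := Fin n) (by linarith : p n ≤ 1)
    refine sub_le_sub_left (le_trans (pr_mono hq0 hq1 ?_) hb) 1
    intro S hS hgood
    apply hS
    haveI : Nonempty (Fin n) := ⟨⟨0, by omega⟩⟩
    refine ⟨hgood.connected, ?_⟩
    have hAC : (AC (gr S) : ℝ) ≤ ((5 * (4 * K) + 3 : ℕ) : ℝ) := by exact_mod_cast hgood.AC_le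
    refine hAC.trans ?_
    have hr : 1 ≤ Real.log n / p n := by
      rw [le_div_iff₀ hp0]; linarith
    push_cast
    rw [mul_div_assoc]
    nlinarith
  · filter_upwards [Filter.eventually_ge_atTop 3] with n hn
    obtain ⟨hpa, hpb⟩ := hp n
    have hlog : 0 < Real.log n := Real.log_pos (by exact_mod_cast (by omega : 1 < n))
    have hnpos : (0 : ℝ) < n := by positivity
    have hp0 : 0 < p n := lt_of_lt_of_le (by positivity) hpa
    rw [gnp_eq, pr_compl]
    have := pr_nonneg (qn_nonneg (V := Fin n) hp0.le)
      (qn_le_one (V := Fin n) (by linarith : p n ≤ 1))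
      (fun S => ¬ ((gr S).Connected ∧
        (AC (gr S) : ℝ) ≤ (20 * (48 / ε) + 23) * Real.log n / p n))
    linarith
end
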